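/- arXiv:1811.11219 — 11 statements merged into one kernel-verified Lean document; each statement's English description precedes it below -/
import Mathlib

section
/- For all nonnegative integers n, r, s, the number of partitions π of n such that π has exactly r odd parts and the conjugate partition π′ has exactly s odd parts is equal to the number of partitions of n having exactly s odd parts and such that twice the number of parts congruent to 2 modulo 4 plus the number of distinct odd integers occurring with odd multiplicity equals r. -/
/-- A partition, modeled as a nonincreasing function `ℕ → ℕ` (the `i`-th value is the
`(i+1)`-st term of the sequence) with only finitely many nonzero terms. -/
def IsPartitionFun (f : ℕ → ℕ) : Prop :=
  (∀ i j, i ≤ j → f j ≤ f i) ∧ ∃ N, ∀ i, N ≤ i → f i = 0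

/-- The sum of the parts of a partition. -/
noncomputable def partSum (f : ℕ → ℕ) : ℕ := ∑' i, f i

/-- The number of odd parts of a partition. -/
noncomputable def oddParts (f : ℕ → ℕ) : ℕ := {i | Odd (f i)}.ncard

/-- The conjugate partition: its `(i+1)`-st term is the number of parts of `f` that
are at least `i+1`. -/
noncomputable def conjFun (f : ℕ → ℕ) : ℕ → ℕ := fun i => {j | i + 1 ≤ f j}.ncard

/-- The multiplicity of `k` as a part of `f`. -/
noncomputable def multiplicity' (f : ℕ → ℕ) (k : ℕ) : ℕ := {i | f i = k}.ncard

/-- The cardinality of a bounded set as a sum of indicators. -/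
theorem ncard_eq_sum_ind (p : ℕ → Prop) [DecidablePred p] (N : ℕ) (h : ∀ i, N ≤ i → ¬ p i) :
    {i | p i}.ncard = ∑ i ∈ Finset.range N, if p i then 1 else 0 := by
  have : {i | p i} = ((Finset.range N).filter p : Set ℕ) := by
    ext i
    simp only [Set.mem_ofPred_eq, Finset.coe_filter, Finset.mem_range]
    constructor
    · intro hi
      refine ⟨?_, hi⟩
      by_contra hc
      exact h i (by omega) hi
    · exact fun hi => hi.2
  rw [this, Set.ncard_coe_finset, Finset.card_filter]

theorem partSum_eq (f : ℕ → ℕ) (N : ℕ) (h : ∀ i, N ≤ i → f i = 0) :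
    partSum f = ∑ i ∈ Finset.range N, f i := by
  unfold partSum
  apply tsum_eq_sum
  intro i hi
  exact h i (by simpa using hi)

theorem oddParts_eq (f : ℕ → ℕ) (N : ℕ) (h : ∀ i, N ≤ i → f i = 0) :
    oddParts f = ∑ i ∈ Finset.range N, f i % 2 := by
  unfold oddParts
  rw [ncard_eq_sum_ind (fun i => Odd (f i)) N (by intro i hi; simp [h i hi])]
  apply Finset.sum_congr rfl
  intro i _
  split_ifs with hh
  · rw [Nat.odd_iff] at hh; omega
  · rw [Nat.odd_iff] at hh; omega

theorem mod4_eq (f : ℕ → ℕ) (N : ℕ) (h : ∀ i, N ≤ i → f i = 0) :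
    {i : ℕ | f i % 4 = 2}.ncard = ∑ i ∈ Finset.range N, if f i % 4 = 2 then 1 else 0 :=
  ncard_eq_sum_ind (fun i => f i % 4 = 2) N (by intro i hi; simp [h i hi])

theorem K_iff {f : ℕ → ℕ} (hf : IsPartitionFun f) {k : ℕ} (hk : 1 ≤ k) (i : ℕ) :
    k ≤ f i ↔ i < {j | k ≤ f j}.ncard := by
  classical
  obtain ⟨hm, N, hN⟩ := hf
  have hex : ∃ j, f j < k := ⟨N, by rw [hN N le_rfl]; omega⟩
  have hset : {j | k ≤ f j} = ((Finset.range (Nat.find hex) : Finset ℕ) : Set ℕ) := by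
    ext j
    simp only [Set.mem_ofPred_eq, Finset.coe_range, Set.mem_Iio]
    rw [Nat.lt_find_iff]
    constructor
    · intro h m hmj
      have := hm m j hmj
      omega
    · intro h
      have := h j le_rfl
      omega
  rw [hset, Set.ncard_coe_finset, Finset.card_range, ← Finset.mem_range, ← Finset.mem_coe, ← hset]
  rfl

theorem K_succ {f : ℕ → ℕ} (hf : IsPartitionFun f) {k : ℕ} (hk : 1 ≤ k) :
    {j | k ≤ f j}.ncard = multiplicity' f k + {j | k + 1 ≤ f j}.ncard := by
  have h1 := fun i => K_iff hf hk i
  have h2 := fun i => K_iff hf (show 1 ≤ k + 1 by omega) i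
  unfold multiplicity'
  generalize {j | k ≤ f j}.ncard = A at *
  generalize {j | k + 1 ≤ f j}.ncard = B at *
  have hBA : B ≤ A := by
    by_contra hc
    have a1 := h1 A
    have a2 := h2 A
    omega
  have : {i | f i = k} = ((Finset.Ico B A : Finset ℕ) : Set ℕ) := by
    ext i
    simp only [Set.mem_ofPred_eq, Finset.coe_Ico, Set.mem_Ico]
    have a1 := h1 i
    have a2 := h2 i
    omega
  rw [this, Set.ncard_coe_finset, Nat.card_Ico]
  omega

theorem part_le_zero {f : ℕ → ℕ} (hf : IsPartitionFun f) (i : ℕ) : f i ≤ f 0 :=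
  hf.1 0 i (Nat.zero_le _)

theorem part_ext {f g : ℕ → ℕ} (hf : IsPartitionFun f) (hg : IsPartitionFun g)
    (h : ∀ k, 1 ≤ k → multiplicity' f k = multiplicity' g k) : f = g := by
  have hK : ∀ d k, 1 ≤ k → f 0 + g 0 + 1 ≤ k + d →
      {j | k ≤ f j}.ncard = {j | k ≤ g j}.ncard := by
    intro d
    induction d with
    | zero =>
      intro k hk hkd
      have e1 : {j | k ≤ f j} = ∅ := by
        ext j
        have := part_le_zero hf j
        simp only [Set.mem_ofPred_eq, Set.mem_empty_iff_false, iff_false]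
        omega
      have e2 : {j | k ≤ g j} = ∅ := by
        ext j
        have := part_le_zero hg j
        simp only [Set.mem_ofPred_eq, Set.mem_empty_iff_false, iff_false]
        omega
      rw [e1, e2]
    | succ d ih =>
      intro k hk hkd
      rw [K_succ hf hk, K_succ hg hk, h k hk, ih (k + 1) (by omega) (by omega)]
  funext i
  have key : ∀ k, 1 ≤ k → (k ≤ f i ↔ k ≤ g i) := by
    intro k hk
    rw [K_iff hf hk, K_iff hg hk, hK (f 0 + g 0 + 1) k hk (by omega)]
  have a1 := key (f i)
  have a2 := key (g i)
  omega

theorem part_exists (c : ℕ → ℕ) (M : ℕ) (hM : ∀ k, M ≤ k → c k = 0) :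
    ∃ f, IsPartitionFun f ∧ ∀ k, 1 ≤ k → multiplicity' f k = c k := by
  classical
  let C : ℕ → ℕ := fun k => ∑ j ∈ Finset.Ico k M, c j
  have hC : ∀ k, C k = c k + C (k + 1) := by
    intro k
    by_cases hk : k < M
    · exact Finset.sum_eq_sum_Ico_succ_bot hk c
    · simp only [C]
      rw [Finset.Ico_eq_empty (by omega), Finset.Ico_eq_empty (by omega), hM k (by omega)]
      simp
  have hCM : ∀ k, M ≤ k → C k = 0 := by
    intro k hk
    simp only [C]
    rw [Finset.Ico_eq_empty (by omega)]
    simp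
  have hCa : Antitone C := antitone_nat_of_succ_le (fun k => by rw [hC k]; omega)
  let f : ℕ → ℕ := fun i => Nat.findGreatest (fun k => i < C k) M
  have hf : ∀ i k, 1 ≤ k → (k ≤ f i ↔ i < C k) := by
    intro i k hk
    constructor
    · intro h
      have h0 : f i ≠ 0 := by omega
      have := Nat.findGreatest_of_ne_zero (P := fun k => i < C k) (n := M) (m := f i) rfl h0
      exact lt_of_lt_of_le this (hCa h)
    · intro h
      apply Nat.le_findGreatest (P := fun k => i < C k) _ h
      by_contra hc
      rw [hCM k (by omega)] at h
      omega
  have hp : IsPartitionFun f := by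
    constructor
    · intro i j hij
      by_contra hc
      have a := (hf j (f j) (by omega)).1 le_rfl
      have b := (hf i (f j) (by omega)).2 (by omega)
      omega
    · refine ⟨C 1, fun i hi => ?_⟩
      have := hf i 1 le_rfl
      omega
  refine ⟨f, hp, ?_⟩
  intro k hk
  unfold multiplicity'
  have : {i | f i = k} = ((Finset.Ico (C (k + 1)) (C k) : Finset ℕ) : Set ℕ) := by
    ext i
    simp only [Set.mem_ofPred_eq, Finset.coe_Ico, Set.mem_Ico]
    have a1 := hf i k hk
    have a2 := hf i (k + 1) (by omega)
    omega
  rw [this, Set.ncard_coe_finset, Nat.card_Ico, hC k]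
  omega

theorem sum_mult (f g : ℕ → ℕ) (N M : ℕ) (hN : ∀ i, N ≤ i → f i = 0) (hM : ∀ i, f i < M)
    (hg : g 0 = 0) :
    ∑ i ∈ Finset.range N, g (f i) = ∑ k ∈ Finset.range M, multiplicity' f k * g k := by
  classical
  rw [← Finset.sum_fiberwise_of_maps_to (s := Finset.range N) (t := Finset.range M) (g := f)
    (fun i _ => Finset.mem_range.2 (hM i))]
  apply Finset.sum_congr rfl
  intro k _
  rw [Finset.sum_congr rfl (g := fun _ => g k)
    (by intro i hi; rw [(Finset.mem_filter.1 hi).2]), Finset.sum_const, smul_eq_mul]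
  by_cases hk : k = 0
  · subst hk; simp [hg]
  · congr 1
    unfold multiplicity'
    rw [ncard_eq_sum_ind (fun i => f i = k) N (by intro i hi; rw [hN i hi]; omega),
      Finset.card_filter]

theorem mult_zero_of_lt (f : ℕ → ℕ) (M k : ℕ) (hM : ∀ i, f i < M) (hk : M ≤ k) :
    multiplicity' f k = 0 := by
  unfold multiplicity'
  have : {i | f i = k} = ∅ := by
    ext i
    have := hM i
    simp only [Set.mem_ofPred_eq, Set.mem_empty_iff_false, iff_false]
    omega
  rw [this, Set.ncard_empty]

/-- Number of odd parts of the conjugate equals the alternating sum. -/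
theorem oddParts_conj {f : ℕ → ℕ} (hf : IsPartitionFun f) (N : ℕ)
    (hN : ∀ i, 2 * N ≤ i → f i = 0) :
    oddParts (conjFun f) = ∑ i ∈ Finset.range N, (f (2 * i) - f (2 * i + 1)) := by
  classical
  unfold oddParts
  have hdisj : ∀ i j, i < j → f (2 * j) ≤ f (2 * i + 1) := fun i j hij =>
    hf.1 _ _ (by omega)
  have : {i | Odd (conjFun f i)} =
      (((Finset.range N).biUnion (fun i => Finset.Ico (f (2 * i + 1)) (f (2 * i))) :
        Finset ℕ) : Set ℕ) := by
    ext k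
    have hK := fun i => K_iff hf (show 1 ≤ k + 1 by omega) i
    simp only [Set.mem_ofPred_eq, Finset.coe_biUnion, Finset.coe_range, Set.mem_Iio,
      Finset.coe_Ico, Set.mem_iUnion, Set.mem_Ico, exists_prop]
    unfold conjFun
    generalize {j | k + 1 ≤ f j}.ncard = A at *
    constructor
    · rintro ⟨i, rfl⟩
      have a1 := hK (2 * i)
      have a2 := hK (2 * i + 1)
      refine ⟨i, ?_, by omega, by omega⟩
      by_contra hc
      have := hN (2 * i) (by omega)
      omega
    · rintro ⟨i, _, h1, h2⟩
      have a1 := hK (2 * i)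
      have a2 := hK (2 * i + 1)
      exact ⟨i, by omega⟩
  rw [this, Set.ncard_coe_finset, Finset.card_biUnion]
  · simp
  · intro i _ j _ hij
    show Disjoint (Finset.Ico _ _) (Finset.Ico _ _)
    rw [Finset.disjoint_left]
    intro k h1 h2
    rw [Finset.mem_Ico] at h1 h2
    rcases Nat.lt_or_gt_of_ne hij with h | h
    · have := hdisj i j h; omega
    · have := hdisj j i h; omega

theorem sum_range_two_mul (g : ℕ → ℕ) (N : ℕ) :
    ∑ i ∈ Finset.range (2 * N), g i = ∑ i ∈ Finset.range N, (g (2 * i) + g (2 * i + 1)) := by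
  induction N with
  | zero => simp
  | succ n ih =>
    rw [show 2 * (n + 1) = 2 * n + 1 + 1 by ring, Finset.sum_range_succ, Finset.sum_range_succ,
      ih, Finset.sum_range_succ]
    ring

theorem sum_tail (t : ℕ → ℕ) (ht : ∀ i, t (i + 1) ≤ t i) (N : ℕ) :
    ∑ i ∈ Finset.range N, (2 * i + 1) * (t i - t (i + 1)) + 2 * N * t N =
      ∑ i ∈ Finset.range N, (t i + t (i + 1)) := by
  induction N with
  | zero => simp
  | succ n ih =>
    rw [Finset.sum_range_succ, Finset.sum_range_succ, ← ih]
    obtain ⟨d, hd⟩ := Nat.exists_eq_add_of_le (ht n)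
    rw [hd, Nat.add_sub_cancel_left]
    ring

/-- The intermediate objects: pairs `(t, ρ)` of partitions where `ρ` has distinct odd parts. -/
def MidSet : Set ((ℕ → ℕ) × (ℕ → ℕ)) :=
  {a | IsPartitionFun a.1 ∧ IsPartitionFun a.2 ∧ ∀ i, Odd (a.2 i) → a.2 (i + 1) < a.2 i}

/-- The partition `λ` attached to `(t, ρ)`. -/
def lamMap (a : (ℕ → ℕ) × (ℕ → ℕ)) : ℕ → ℕ := fun j =>
  if j % 2 = 0 then (a.2 (j / 2) + 1) / 2 + 2 * a.1 (j / 2)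
  else a.2 (j / 2) / 2 + 2 * a.1 (j / 2 + 1)

theorem lamMap_even (a : (ℕ → ℕ) × (ℕ → ℕ)) (i : ℕ) :
    lamMap a (2 * i) = (a.2 i + 1) / 2 + 2 * a.1 i := by
  unfold lamMap
  rw [if_pos (by omega), show 2 * i / 2 = i by omega]

theorem lamMap_odd (a : (ℕ → ℕ) × (ℕ → ℕ)) (i : ℕ) :
    lamMap a (2 * i + 1) = a.2 i / 2 + 2 * a.1 (i + 1) := by
  unfold lamMap
  rw [if_neg (by omega), show (2 * i + 1) / 2 = i by omega]

theorem lamMap_part {a : (ℕ → ℕ) × (ℕ → ℕ)} (ha : a ∈ MidSet) : IsPartitionFun (lamMap a) := by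
  obtain ⟨⟨h1, N1, hN1⟩, ⟨h2, N2, hN2⟩, h3⟩ := ha
  constructor
  · have : Antitone (lamMap a) := by
      apply antitone_nat_of_succ_le
      intro j
      rcases Nat.even_or_odd' j with ⟨i, rfl | rfl⟩
      · rw [lamMap_even, lamMap_odd]
        have := h1 i (i + 1) (by omega)
        omega
      · rw [lamMap_odd, show 2 * i + 1 + 1 = 2 * (i + 1) by ring, lamMap_even]
        have a1 := h2 i (i + 1) (by omega)
        have a2 := h3 i
        rw [Nat.odd_iff] at a2
        by_cases hh : a.2 i % 2 = 1
        · have := a2 hh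
          omega
        · omega
    exact fun i j hij => this hij
  · refine ⟨2 * (N1 + N2), fun j hj => ?_⟩
    rcases Nat.even_or_odd' j with ⟨i, rfl | rfl⟩
    · rw [lamMap_even, hN1 i (by omega), hN2 i (by omega)]
    · rw [lamMap_odd, hN1 (i + 1) (by omega), hN2 i (by omega)]

theorem lamMap_inj : Set.InjOn lamMap MidSet := by
  rintro ⟨t, p⟩ ⟨⟨ht, N, hN⟩, _, _⟩ ⟨t', p'⟩ ⟨⟨ht', N', hN'⟩, _, _⟩ h
  have he : ∀ i, (p i + 1) / 2 + 2 * t i = (p' i + 1) / 2 + 2 * t' i := fun i => by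
    have := congrFun h (2 * i)
    rwa [lamMap_even, lamMap_even] at this
  have ho : ∀ i, p i / 2 + 2 * t (i + 1) = p' i / 2 + 2 * t' (i + 1) := fun i => by
    have := congrFun h (2 * i + 1)
    rwa [lamMap_odd, lamMap_odd] at this
  simp only at ht ht' hN hN'
  have key : ∀ d i, N + N' ≤ i + d → t i = t' i := by
    intro d
    induction d with
    | zero => intro i hi; rw [hN i (by omega), hN' i (by omega)]
    | succ d ih =>
      intro i hi
      have := ih (i + 1) (by omega)
      have := he i
      have := ho i
      omega
  have htt : t = t' := funext fun i => key (N + N') i (by omega)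
  subst htt
  have : p = p' := funext fun i => by
    have := he i
    have := ho i
    omega
  rw [this]

theorem lamMap_surj {f : ℕ → ℕ} (hf : IsPartitionFun f) : ∃ a ∈ MidSet, lamMap a = f := by
  obtain ⟨hm, N, hN⟩ := hf
  let x : ℕ → ℕ := fun i => (f (2 * i) - f (2 * i + 1)) / 2
  let t : ℕ → ℕ := fun i => ∑ j ∈ Finset.Ico i N, x j
  have hxN : ∀ i, N ≤ i → x i = 0 := by
    intro i hi
    simp only [x]
    rw [hN (2 * i) (by omega)]
    simp
  have ht : ∀ i, t i = x i + t (i + 1) := by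
    intro i
    by_cases hk : i < N
    · exact Finset.sum_eq_sum_Ico_succ_bot hk x
    · simp only [t]
      rw [Finset.Ico_eq_empty (by omega), Finset.Ico_eq_empty (by omega), hxN i (by omega)]
      simp
  have htN : ∀ k, N ≤ k → t k = 0 := by
    intro k hk
    simp only [t]
    rw [Finset.Ico_eq_empty (by omega)]
    simp
  have hle : ∀ d i, N ≤ i + d → 2 * t i ≤ f (2 * i) := by
    intro d
    induction d with
    | zero => intro i hi; rw [htN i (by omega)]; omega
    | succ d ih =>
      intro i hi
      have a1 := ih (i + 1) (by omega)
      have a2 := ht i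
      have a3 := hm (2 * i + 1) (2 * (i + 1)) (by omega)
      have a4 := hm (2 * i) (2 * i + 1) (by omega)
      simp only [x] at a2
      omega
  let p : ℕ → ℕ := fun i => f (2 * i) + f (2 * i + 1) - 2 * t i - 2 * t (i + 1)
  have hfacts : ∀ i, 2 * t (i + 1) ≤ f (2 * i + 1) ∧ f (2 * i + 1) ≤ f (2 * i) ∧
      t i = (f (2 * i) - f (2 * i + 1)) / 2 + t (i + 1) ∧
      p i = f (2 * i) + f (2 * i + 1) - 2 * t i - 2 * t (i + 1) := by
    intro i
    refine ⟨le_trans (hle N (i + 1) (by omega)) (hm _ _ (by omega)), hm _ _ (by omega), ht i, rfl⟩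
  refine ⟨(t, p), ⟨⟨?_, N, htN⟩, ⟨?_, N, ?_⟩, ?_⟩, ?_⟩
  · have : Antitone t := antitone_nat_of_succ_le (fun k => by rw [ht k]; omega)
    exact fun i j hij => this hij
  · have : Antitone p := by
      apply antitone_nat_of_succ_le
      intro i
      have a1 := hfacts i
      have a2 := hfacts (i + 1)
      have a3 := hm (2 * i + 1) (2 * (i + 1)) (by omega)
      omega
    exact fun i j hij => this hij
  · intro i hi
    simp only [p]
    rw [hN _ (by omega), hN _ (by omega)]
    simp
  · intro i hi
    rw [Nat.odd_iff] at hi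
    simp only at hi ⊢
    have a1 := hfacts i
    have a2 := hfacts (i + 1)
    have a3 := hm (2 * i + 1) (2 * (i + 1)) (by omega)
    omega
  · funext j
    rcases Nat.even_or_odd' j with ⟨i, rfl | rfl⟩
    · rw [lamMap_even]
      have a1 := hfacts i
      simp only
      omega
    · rw [lamMap_odd]
      have a1 := hfacts i
      simp only
      omega

/-- Multiplicities of the partition `τ` attached to `(t, ρ)`. -/
noncomputable def tauMult (a : (ℕ → ℕ) × (ℕ → ℕ)) (k : ℕ) : ℕ :=
  multiplicity' a.2 k + (k % 2) * (2 * (a.1 (k / 2) - a.1 (k / 2 + 1)))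

theorem tau_exists (a : (ℕ → ℕ) × (ℕ → ℕ)) :
    ∃ f, a ∈ MidSet → IsPartitionFun f ∧ ∀ k, 1 ≤ k → multiplicity' f k = tauMult a k := by
  by_cases ha : a ∈ MidSet
  · obtain ⟨⟨h1, N, hN⟩, h2, h3⟩ := id ha
    obtain ⟨f, hf⟩ := part_exists (tauMult a) (a.2 0 + 1 + 2 * N) (by
      intro k hk
      unfold tauMult
      rw [mult_zero_of_lt a.2 (a.2 0 + 1) k
        (fun i => Nat.lt_succ_of_le (part_le_zero h2 i)) (by omega),
        hN (k / 2) (by omega)]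
      simp)
    exact ⟨f, fun _ => hf⟩
  · exact ⟨fun _ => 0, fun h => absurd h ha⟩

/-- The partition `τ` attached to `(t, ρ)`. -/
noncomputable def tauMap (a : (ℕ → ℕ) × (ℕ → ℕ)) : ℕ → ℕ := Classical.choose (tau_exists a)

theorem tauMap_spec {a : (ℕ → ℕ) × (ℕ → ℕ)} (ha : a ∈ MidSet) :
    IsPartitionFun (tauMap a) ∧ ∀ k, 1 ≤ k → multiplicity' (tauMap a) k = tauMult a k :=
  Classical.choose_spec (tau_exists a) ha

theorem mid_odd_mult {p : ℕ → ℕ} (hp : IsPartitionFun p)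
    (h : ∀ i, Odd (p i) → p (i + 1) < p i) (k : ℕ) (hk : k % 2 = 1) :
    multiplicity' p k ≤ 1 := by
  unfold multiplicity'
  have hone : ∀ i j, p i = k → p j = k → ¬ i < j := by
    intro i j hi hj hij
    have a1 := h i (by rw [Nat.odd_iff]; omega)
    have a2 := hp.1 (i + 1) j (by omega)
    omega
  have hsub : {i | p i = k}.Subsingleton := by
    intro i hi j hj
    have a1 := hone i j hi hj
    have a2 := hone j i hj hi
    omega
  exact (Set.ncard_le_one hsub.finite).2 (fun i hi j hj => hsub hi hj)

theorem mid_odd_mult_conv {p : ℕ → ℕ} (hp : IsPartitionFun p)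
    (h : ∀ k, k % 2 = 1 → multiplicity' p k ≤ 1) (i : ℕ) (hi : Odd (p i)) : p (i + 1) < p i := by
  rw [Nat.odd_iff] at hi
  by_contra hc
  have he : p (i + 1) = p i := le_antisymm (hp.1 _ _ (by omega)) (by omega)
  have h1 := h (p i) hi
  have hfin : {j | p j = p i}.Finite := by
    obtain ⟨_, N, hN⟩ := hp
    apply (Set.finite_Iio N).subset
    intro j hj
    simp only [Set.mem_ofPred_eq] at hj
    by_contra hcc
    rw [Set.mem_Iio] at hcc
    have := hN j (by omega)
    omega
  unfold multiplicity' at h1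
  rw [Set.ncard_le_one hfin] at h1
  have := h1 i rfl (i + 1) he
  omega

theorem tauMap_inj : Set.InjOn tauMap MidSet := by
  rintro ⟨t, p⟩ ha ⟨t', p'⟩ ha' h
  have hs := tauMap_spec ha
  have hs' := tauMap_spec ha'
  have hm : ∀ k, 1 ≤ k → tauMult (t, p) k = tauMult (t', p') k := fun k hk => by
    rw [← hs.2 k hk, ← hs'.2 k hk, h]
  obtain ⟨⟨ht, N, hN⟩, hp, h3⟩ := ha
  obtain ⟨⟨ht', N', hN'⟩, hp', h3'⟩ := ha'
  simp only at ht ht' hN hN' hp hp' h3 h3'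
  unfold tauMult at hm
  simp only at hm
  have hodd : ∀ i, multiplicity' p (2 * i + 1) = multiplicity' p' (2 * i + 1) ∧
      t i - t (i + 1) = t' i - t' (i + 1) := by
    intro i
    have a1 := hm (2 * i + 1) (by omega)
    have a2 := mid_odd_mult hp h3 (2 * i + 1) (by omega)
    have a3 := mid_odd_mult hp' h3' (2 * i + 1) (by omega)
    rw [show (2 * i + 1) % 2 = 1 by omega, show (2 * i + 1) / 2 = i by omega] at a1
    omega
  have key : ∀ d i, N + N' ≤ i + d → t i = t' i := by
    intro d
    induction d with
    | zero => intro i hi; rw [hN i (by omega), hN' i (by omega)]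
    | succ d ih =>
      intro i hi
      have := ih (i + 1) (by omega)
      have := (hodd i).2
      have := ht i (i + 1) (by omega)
      have := ht' i (i + 1) (by omega)
      omega
  have htt : t = t' := funext fun i => key (N + N') i (by omega)
  have hpp : p = p' := by
    apply part_ext hp hp'
    intro k hk
    rcases Nat.even_or_odd' k with ⟨i, rfl | rfl⟩
    · have a1 := hm (2 * i) hk
      rw [show (2 * i) % 2 = 0 by omega] at a1
      omega
    · exact (hodd i).1
  rw [htt, hpp]

theorem tauMap_surj {f : ℕ → ℕ} (hf : IsPartitionFun f) : ∃ a ∈ MidSet, tauMap a = f := by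
  have hM : ∀ i, f i < f 0 + 1 := fun i => Nat.lt_succ_of_le (part_le_zero hf i)
  obtain ⟨p, hp, hpm⟩ := part_exists
    (fun k => if k % 2 = 1 then multiplicity' f k % 2 else multiplicity' f k) (f 0 + 1) (by
      intro k hk
      simp only [mult_zero_of_lt f _ k hM hk]
      simp)
  let x : ℕ → ℕ := fun i => multiplicity' f (2 * i + 1) / 2
  let N := f 0 + 1
  let t : ℕ → ℕ := fun i => ∑ j ∈ Finset.Ico i N, x j
  have hxN : ∀ i, N ≤ i → x i = 0 := by
    intro i hi
    simp only [x]
    rw [mult_zero_of_lt f _ (2 * i + 1) hM (by omega)]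
  have ht : ∀ i, t i = x i + t (i + 1) := by
    intro i
    by_cases hk : i < N
    · exact Finset.sum_eq_sum_Ico_succ_bot hk x
    · simp only [t]
      rw [Finset.Ico_eq_empty (by omega), Finset.Ico_eq_empty (by omega), hxN i (by omega)]
      simp
  have htN : ∀ k, N ≤ k → t k = 0 := by
    intro k hk
    simp only [t]
    rw [Finset.Ico_eq_empty (by omega)]
    simp
  have hmem : (t, p) ∈ MidSet := by
    refine ⟨⟨?_, N, htN⟩, hp, ?_⟩
    · have : Antitone t := antitone_nat_of_succ_le (fun k => by rw [ht k]; omega)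
      exact fun i j hij => this hij
    · apply mid_odd_mult_conv hp
      intro k hk
      rw [hpm k (by omega), if_pos hk]
      omega
  refine ⟨(t, p), hmem, ?_⟩
  have hs := tauMap_spec hmem
  apply part_ext hs.1 hf
  intro k hk
  rw [hs.2 k hk]
  unfold tauMult
  simp only
  rw [hpm k hk]
  rcases Nat.even_or_odd' k with ⟨i, rfl | rfl⟩
  · rw [show (2 * i) % 2 = 0 by omega]
    simp
  · rw [show (2 * i + 1) % 2 = 1 by omega, show (2 * i + 1) / 2 = i by omega, ht i]
    simp only [x, if_true]
    omega

theorem sum_even_zero (g : ℕ → ℕ) (N : ℕ) :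
    ∑ k ∈ Finset.range (2 * N), (k % 2) * g (k / 2) = ∑ i ∈ Finset.range N, g i := by
  rw [sum_range_two_mul]
  apply Finset.sum_congr rfl
  intro i _
  rw [show (2 * i) % 2 = 0 by omega, show (2 * i + 1) % 2 = 1 by omega,
    show (2 * i + 1) / 2 = i by omega]
  simp

/-- Additive statistics of `τ`. -/
theorem tau_sum {a : (ℕ → ℕ) × (ℕ → ℕ)} (ha : a ∈ MidSet) (g : ℕ → ℕ) (hg : g 0 = 0)
    (N L : ℕ) (hN1 : ∀ i, N ≤ i → a.1 i = 0) (hN2 : ∀ i, N ≤ i → a.2 i = 0)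
    (hL : ∀ i, L ≤ i → tauMap a i = 0) :
    ∑ i ∈ Finset.range L, g (tauMap a i) = ∑ i ∈ Finset.range N, g (a.2 i) +
      2 * ∑ i ∈ Finset.range N, (a.1 i - a.1 (i + 1)) * g (2 * i + 1) := by
  have hs := tauMap_spec ha
  obtain ⟨_, h2, _⟩ := id ha
  obtain ⟨M, hM⟩ : ∃ M, M = N + a.2 0 + tauMap a 0 + 1 := ⟨_, rfl⟩
  rw [sum_mult (tauMap a) g L (2 * M) hL
      (fun i => by have := part_le_zero hs.1 i; omega) hg,
    sum_mult a.2 g N (2 * M) hN2 (fun i => by have := part_le_zero h2 i; omega) hg]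
  have h1 : ∑ i ∈ Finset.range N, (a.1 i - a.1 (i + 1)) * g (2 * i + 1) =
      ∑ i ∈ Finset.range M, (a.1 i - a.1 (i + 1)) * g (2 * i + 1) := by
    apply Finset.sum_subset
    · intro i hi
      rw [Finset.mem_range] at *
      omega
    · intro i _ hi
      rw [Finset.mem_range] at hi
      rw [hN1 i (by omega)]
      simp
  rw [h1, Finset.mul_sum, ← sum_even_zero (fun i => 2 * ((a.1 i - a.1 (i + 1)) * g (2 * i + 1))), ← Finset.sum_add_distrib]
  apply Finset.sum_congr rfl
  intro k _
  by_cases hk : k = 0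
  · subst hk; simp [hg]
  · rw [hs.2 k (by omega)]
    unfold tauMult
    rcases Nat.even_or_odd' k with ⟨i, rfl | rfl⟩
    · rw [show (2 * i) % 2 = 0 by omega]
      ring
    · rw [show (2 * i + 1) % 2 = 1 by omega, show (2 * i + 1) / 2 = i by omega]
      ring

theorem tau_oddmult {a : (ℕ → ℕ) × (ℕ → ℕ)} (ha : a ∈ MidSet)
    (N : ℕ) (hN2 : ∀ i, N ≤ i → a.2 i = 0) :
    {k : ℕ | Odd k ∧ Odd (multiplicity' (tauMap a) k)}.ncard =
      ∑ i ∈ Finset.range N, a.2 i % 2 := by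
  classical
  have hs := tauMap_spec ha
  obtain ⟨_, h2, h3⟩ := id ha
  rw [sum_mult a.2 (fun k => k % 2) N (tauMap a 0 + a.2 0 + 1) hN2
    (fun i => by have := part_le_zero h2 i; omega) rfl]
  rw [ncard_eq_sum_ind (fun k => Odd k ∧ Odd (multiplicity' (tauMap a) k))
    (tauMap a 0 + a.2 0 + 1)]
  · apply Finset.sum_congr rfl
    intro k _
    rcases Nat.even_or_odd' k with ⟨i, rfl | rfl⟩
    · rw [if_neg (by rw [Nat.odd_iff]; omega)]
      simp
    · have a1 := mid_odd_mult h2 h3 (2 * i + 1) (by omega)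
      rw [hs.2 _ (by omega)]
      unfold tauMult
      simp only [Nat.odd_iff]
      rw [show (2 * i + 1) % 2 = 1 by omega]
      split_ifs with hh
      · omega
      · omega
  · intro k hk
    rw [mult_zero_of_lt (tauMap a) (tauMap a 0 + 1) k
      (fun i => by have := part_le_zero hs.1 i; omega) (by omega)]
    simp

theorem stats_eq {a : (ℕ → ℕ) × (ℕ → ℕ)} (ha : a ∈ MidSet) :
    partSum (lamMap a) = partSum (tauMap a) ∧
    oddParts (lamMap a) = 2 * {i : ℕ | tauMap a i % 4 = 2}.ncard
          + {k : ℕ | Odd k ∧ Odd (multiplicity' (tauMap a) k)}.ncard ∧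
    oddParts (conjFun (lamMap a)) = oddParts (tauMap a) := by
  have hs := tauMap_spec ha
  have hl := lamMap_part ha
  obtain ⟨⟨h1, N1, hN1⟩, ⟨h2, N2, hN2⟩, h3⟩ := id ha
  obtain ⟨L, hL⟩ := hs.1.2
  obtain ⟨N, hNdef⟩ : ∃ N, N = N1 + N2 := ⟨_, rfl⟩
  have hNt : ∀ i, N ≤ i → a.1 i = 0 := fun i hi => hN1 i (by omega)
  have hNp : ∀ i, N ≤ i → a.2 i = 0 := fun i hi => hN2 i (by omega)
  have hlN : ∀ j, 2 * N ≤ j → lamMap a j = 0 := by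
    intro j hj
    rcases Nat.even_or_odd' j with ⟨i, rfl | rfl⟩
    · rw [lamMap_even, hNt i (by omega), hNp i (by omega)]
    · rw [lamMap_odd, hNt (i + 1) (by omega), hNp i (by omega)]
  refine ⟨?_, ?_, ?_⟩
  · rw [partSum_eq _ _ hlN, partSum_eq _ _ hL, sum_range_two_mul]
    have e := tau_sum ha (fun k => k) rfl N L hNt hNp hL
    rw [e]
    have e2 := sum_tail a.1 (fun i => h1 i (i + 1) (by omega)) N
    rw [hNt N le_rfl, mul_zero, add_zero] at e2
    simp only [mul_comm (_ - _) (2 * _ + 1)]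
    rw [e2, Finset.mul_sum, ← Finset.sum_add_distrib]
    apply Finset.sum_congr rfl
    intro i _
    rw [lamMap_even, lamMap_odd]
    omega
  · rw [oddParts_eq _ _ hlN, mod4_eq _ _ hL, sum_range_two_mul, tau_oddmult ha N hNp]
    have e := tau_sum ha (fun k => if k % 4 = 2 then 1 else 0) rfl N L hNt hNp hL
    rw [e]
    have e0 : ∑ i ∈ Finset.range N,
        (a.1 i - a.1 (i + 1)) * (if (2 * i + 1) % 4 = 2 then 1 else 0) = 0 := by
      apply Finset.sum_eq_zero
      intro i _
      rw [if_neg (by omega), mul_zero]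
    rw [e0, mul_zero, add_zero, Finset.mul_sum, ← Finset.sum_add_distrib]
    apply Finset.sum_congr rfl
    intro i _
    rw [lamMap_even, lamMap_odd]
    split_ifs with hh
    · omega
    · omega
  · rw [oddParts_conj hl N hlN, oddParts_eq _ _ hL]
    have e := tau_sum ha (fun k => k % 2) rfl N L hNt hNp hL
    rw [e, Finset.mul_sum, ← Finset.sum_add_distrib]
    apply Finset.sum_congr rfl
    intro i _
    rw [lamMap_even, lamMap_odd, show (2 * i + 1) % 2 = 1 by omega]
    have := h1 i (i + 1) (by omega)
    omega

/-- For all nonnegative integers `n, r, s`, the number of partitions `π` of `n` such that `π`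
has exactly `r` odd parts and the conjugate `π′` has exactly `s` odd parts equals the number
of partitions of `n` having exactly `s` odd parts and such that twice the number of parts
congruent to 2 mod 4 plus the number of distinct odd integers occurring with odd
multiplicity equals `r`. -/
theorem stanley_partition_identity (n r s : ℕ) :
    {f : ℕ → ℕ | IsPartitionFun f ∧ partSum f = n ∧ oddParts f = r ∧
        oddParts (conjFun f) = s}.ncard =
    {f : ℕ → ℕ | IsPartitionFun f ∧ partSum f = n ∧ oddParts f = s ∧
        2 * {i : ℕ | f i % 4 = 2}.ncard
          + {k : ℕ | Odd k ∧ Odd (multiplicity' f k)}.ncard = r}.ncard := by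
  have hL : {f : ℕ → ℕ | IsPartitionFun f ∧ partSum f = n ∧ oddParts f = r ∧
        oddParts (conjFun f) = s} = Set.image lamMap {a | a ∈ MidSet ∧ partSum (lamMap a) = n ∧
          oddParts (lamMap a) = r ∧ oddParts (conjFun (lamMap a)) = s} := by
    ext f
    constructor
    · rintro ⟨hf, h⟩
      obtain ⟨a, ha, rfl⟩ := lamMap_surj hf
      exact ⟨a, ⟨ha, h⟩, rfl⟩
    · rintro ⟨a, ⟨ha, h⟩, rfl⟩
      exact ⟨lamMap_part ha, h⟩
  have hR : {f : ℕ → ℕ | IsPartitionFun f ∧ partSum f = n ∧ oddParts f = s ∧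
        2 * {i : ℕ | f i % 4 = 2}.ncard
          + {k : ℕ | Odd k ∧ Odd (multiplicity' f k)}.ncard = r} =
      Set.image tauMap {a | a ∈ MidSet ∧ partSum (lamMap a) = n ∧
          oddParts (lamMap a) = r ∧ oddParts (conjFun (lamMap a)) = s} := by
    ext f
    constructor
    · rintro ⟨hf, h1, h2, h3⟩
      obtain ⟨a, ha, rfl⟩ := tauMap_surj hf
      obtain ⟨e1, e2, e3⟩ := stats_eq ha
      exact ⟨a, ⟨ha, e1.trans h1, e2.trans h3, e3.trans h2⟩, rfl⟩
    · rintro ⟨a, ⟨ha, h1, h2, h3⟩, rfl⟩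
      obtain ⟨e1, e2, e3⟩ := stats_eq ha
      exact ⟨(tauMap_spec ha).1, e1.symm.trans h1, e3.symm.trans h3, e2.symm.trans h2⟩
  rw [hL, hR, Set.InjOn.ncard_image (lamMap_inj.mono fun a ha => ha.1),
    Set.InjOn.ncard_image (tauMap_inj.mono fun a ha => ha.1)]
end

section
/- As an identity of formal power series in three variables z, y, q (over the integers), the sum over all n, r, s ≥ 0 of S(r,s;n)·zʳyˢqⁿ equals the infinite product over j ≥ 1 of (1 + y·z·q^{2j−1}) / ((1 − q^{4j})(1 − z²q^{4j−2})(1 − y²q^{4j−2})), where S(r,s;n) is the number of partitions π of n with exactly r odd parts whose conjugate π′ has exactly s odd parts. -/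
/-- `S r s n` is the number of partitions `π` of `n` with exactly `r` odd parts whose
conjugate `π′` has exactly `s` odd parts. -/
noncomputable def S (r s n : ℕ) : ℕ :=
  {f : ℕ → ℕ | IsPartitionFun f ∧ partSum f = n ∧ oddParts f = r ∧
      oddParts (conjFun f) = s}.ncard

/-- Formal power series in the three variables `z`, `y`, `q` over `ℤ`. -/
abbrev PS3 := MvPowerSeries (Fin 3) ℤ

/-- The product (coefficientwise) topology on formal power series in three variables. -/
noncomputable instance : TopologicalSpace PS3 :=
  @Pi.topologicalSpace ((Fin 3) →₀ ℕ) (fun _ => ℤ) (fun _ => inferInstance)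

/-- The variable `z`. -/
noncomputable def z : PS3 := MvPowerSeries.X 0
/-- The variable `y`. -/
noncomputable def y : PS3 := MvPowerSeries.X 1
/-- The variable `q`. -/
noncomputable def q : PS3 := MvPowerSeries.X 2

/-- `∑_{n,r,s ≥ 0} S(r,s;n) zʳ yˢ qⁿ`, i.e. the formal power series whose coefficient of
`zʳ yˢ qⁿ` is `S(r,s;n)`. -/
noncomputable def lhsSeries : PS3 :=
  fun d : (Fin 3) →₀ ℕ => (S (d 0) (d 1) (d 2) : ℤ)

/-- The `j`-th factor (for `j ≥ 1`, here indexed by `j - 1 : ℕ`) of the infinite product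
`(1 + yzq^{2j−1}) / ((1 − q^{4j})(1 − z²q^{4j−2})(1 − y²q^{4j−2}))`; the inverse of the
denominator is taken via `MvPowerSeries.invOfUnit` at the unit `1` (its constant term). -/
noncomputable def factor (j : ℕ) : PS3 :=
  (1 + y * z * q ^ (2 * (j + 1) - 1)) *
    MvPowerSeries.invOfUnit
      ((1 - q ^ (4 * (j + 1))) * (1 - z ^ 2 * q ^ (4 * (j + 1) - 2)) *
        (1 - y ^ 2 * q ^ (4 * (j + 1) - 2))) 1

section Alg
variable {R : Type*} [CommRing R]

theorem aux_elim (q y z : R) (U V : ℕ → R)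
    (hU1 : ∀ k, U (2*k+1) = U (2*k) + z*q^(2*k+1) * V (2*k+1))
    (hV1 : ∀ k, V (2*k+1) = y * V (2*k) + z*q^(2*k+1) * U (2*k+1))
    (hU2 : ∀ k, U (2*k+2) = U (2*k+1) + q^(2*k+2) * V (2*k+2))
    (hV2 : ∀ k, V (2*k+2) = y * V (2*k+1) + q^(2*k+2) * U (2*k+2)) (k : ℕ) :
    (1 - z^2*q^(4*k+2)) * (1 - q^(4*k+4)) * U (2*k+2)
      = (1 + z*y*q^(4*k+3)) * U (2*k) + q^(2*k) * (z*y*q + y^2*q^2) * V (2*k) ∧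
    (1 - z^2*q^(4*k+2)) * (1 - q^(4*k+4)) * V (2*k+2)
      = (y^2 + z*y*q^(4*k+3)) * V (2*k) + q^(2*k) * (z*y*q + q^2) * U (2*k) := by
  have e1 := hU1 k
  have e2 := hV1 k
  have e3 := hU2 k
  have e4 := hV2 k
  generalize U (2*k) = u at *
  generalize V (2*k) = v at *
  generalize U (2*k+1) = u1 at *
  generalize V (2*k+1) = v1 at *
  generalize U (2*k+2) = u2 at *
  generalize V (2*k+2) = v2 at *
  have p2 : q^(4*k+2) = (q^(2*k))^2*q^2 := by ring
  have p3 : q^(4*k+3) = (q^(2*k))^2*q^3 := by ring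
  have p4 : q^(4*k+4) = (q^(2*k))^2*q^4 := by ring
  have p5 : q^(2*k+1) = (q^(2*k))*q := by ring
  have p6 : q^(2*k+2) = (q^(2*k))*q^2 := by ring
  rw [p5] at e1 e2
  rw [p6] at e3 e4
  rw [p2, p3, p4]
  generalize q^(2*k) = p at *
  have f1 : (1 - z^2*(p^2*q^2)) * u1 = u + z*(p*q)*y*v := by
    linear_combination e1 + z*(p*q)*e2
  have f2 : (1 - z^2*(p^2*q^2)) * v1 = y*v + z*(p*q)*u := by
    linear_combination e2 + z*(p*q)*e1
  have f3 : (1 - p^2*q^4) * u2 = u1 + p*q^2*y*v1 := by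
    linear_combination e3 + p*q^2*e4
  have f4 : (1 - p^2*q^4) * v2 = y*v1 + p*q^2*u1 := by
    linear_combination e4 + p*q^2*e3
  constructor
  · linear_combination (1 - z^2*(p^2*q^2)) * f3 + f1 + p*q^2*y*f2
  · linear_combination (1 - z^2*(p^2*q^2)) * f4 + y*f2 + p*q^2*f1

/-- Three term recurrence. -/
theorem three_term (q y z : R) (E F : ℕ → R)
    (hE : ∀ k, E (k+1) = (1 + z*y*q^(4*k+3)) * E k + q^(2*k) * (z*y*q + y^2*q^2) * F k)
    (hF : ∀ k, F (k+1) = (y^2 + z*y*q^(4*k+3)) * F k + q^(2*k) * (z*y*q + q^2) * E k) (k : ℕ) :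
    E (k+2) = (1 + y^2*q^2 + (z*y*q+z*y*q^3)*(q^4)^(k+1)) * E (k+1)
      + (1 - (q^4)^(k+1)) * ((z*y*q)*(z*y*q^3)*(q^4)^k - y^2*q^2) * E k := by
  have h1 := hE (k+1)
  have h2 := hE k
  have h3 := hF k
  have p3 : q^(4*k+3) = (q^(2*k))^2*q^3 := by ring
  have p3' : q^(4*(k+1)+3) = (q^(2*k))^2*q^7 := by ring
  have p4 : q^(2*(k+1)) = (q^(2*k))*q^2 := by ring
  have p5 : (q^4)^(k+1) = (q^(2*k))^2*q^4 := by ring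
  have p6 : (q^4)^k = (q^(2*k))^2 := by ring
  rw [p3', p4] at h1
  rw [p3] at h2 h3
  rw [p5, p6]
  generalize q^(2*k) = p at *
  rw [show k+2 = k+1+1 from rfl]
  linear_combination h1 + p*q^2*(z*y*q + y^2*q^2)*h3 - q^2*(y^2+z*y*(p^2*q^3)) * h2

/-- Coefficients of the q-binomial series. -/
noncomputable def bs (Q v w : R) : ℕ → R
  | 0 => 1
  | n+1 => bs Q v w n * (v + w * Q^n) * Ring.inverse (1 - Q^(n+1))

theorem bs_succ (Q v w : R) (hQ : IsNilpotent Q) (n : ℕ) :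
    bs Q v w (n+1) * (1 - Q^(n+1)) = bs Q v w n * (v + w * Q^n) := by
  have hu : IsUnit (1 - Q^(n+1)) := (hQ.pow_succ n).isUnit_one_sub
  rw [bs, mul_assoc, Ring.inverse_mul_cancel _ hu, mul_one]

open PowerSeries in
theorem bs_series (Q v w : R) (hQ : IsNilpotent Q) :
    (1 - C v * X) * PowerSeries.mk (bs Q v w)
      = (1 + C w * X) * PowerSeries.rescale Q (PowerSeries.mk (bs Q v w)) := by
  ext n
  rw [sub_mul, add_mul, mul_assoc, mul_assoc]
  cases n with
  | zero =>
    simp only [map_add, map_sub, coeff_C_mul, coeff_zero_X_mul]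
    simp
  | succ n =>
    have := bs_succ Q v w hQ n
    simp [coeff_succ_X_mul]
    linear_combination this

/-- convolution -/
noncomputable def gs (Q v w α : R) (n : ℕ) : R :=
  PowerSeries.coeff n (PowerSeries.mk (bs Q v w) * PowerSeries.mk (bs Q 1 α))

open PowerSeries in
theorem gs_rec (Q v w α : R) (hQ : IsNilpotent Q) (n : ℕ) :
    (1 - Q^(n+2)) * gs Q v w α (n+2) =
      (1 + v + (α + w) * Q^(n+1)) * gs Q v w α (n+1) + (α*w*Q^n - v) * gs Q v w α n := by
  have h1 := bs_series Q v w hQ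
  have h2 := bs_series Q 1 α hQ
  have h : (mk (bs Q v w) * mk (bs Q 1 α)) - X * (C (1+v) * (mk (bs Q v w) * mk (bs Q 1 α)))
      + X * (X * (C v * (mk (bs Q v w) * mk (bs Q 1 α)))) =
      rescale Q (mk (bs Q v w) * mk (bs Q 1 α)) + X * (C (α + w) * rescale Q (mk (bs Q v w) * mk (bs Q 1 α)))
      + X * (X * (C (α*w) * rescale Q (mk (bs Q v w) * mk (bs Q 1 α)))) := by
    simp only [map_mul, map_add, map_one] at *
    linear_combination (1 - X) * mk (bs Q 1 α) * h1 + (1 + C w * X) * rescale Q (mk (bs Q v w)) * h2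
  have h := congrArg (coeff (n+2)) h
  simp only [map_add, map_sub, show n+2 = (n+1)+1 from rfl, coeff_succ_X_mul, add_mul, coeff_C_mul, coeff_rescale] at h
  unfold gs
  simp only [show n+2 = (n+1)+1 from rfl]
  linear_combination h

theorem bs_dvd (q v w Q : R) (hv : q ∣ v) (hw : q ∣ w) (n : ℕ) : q^n ∣ bs Q v w n := by
  induction n with
  | zero => simp
  | succ n ih =>
    rw [bs, pow_succ]
    exact Dvd.dvd.mul_right (mul_dvd_mul ih (dvd_add hv (hw.mul_right _))) _

theorem E_eq (Q v w α : R) (hQ : IsNilpotent Q) (E : ℕ → R) (h0 : E 0 = 1)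
    (h1 : E 1 = 1 + α + v + w)
    (h : ∀ k, E (k+2) = (1 + v + (α+w)*Q^(k+1)) * E (k+1)
      + (1 - Q^(k+1)) * (α*w*Q^k - v) * E k) (n : ℕ) :
    E n = (∏ k ∈ Finset.range n, (1 - Q^(k+1))) * gs Q v w α n := by
  have key : ∀ n, E n = (∏ k ∈ Finset.range n, (1 - Q^(k+1))) * gs Q v w α n ∧
      E (n+1) = (∏ k ∈ Finset.range (n+1), (1 - Q^(k+1))) * gs Q v w α (n+1) := by
    intro n
    induction n with
    | zero =>
      constructor
      · simp [gs, h0, bs]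
      · have e1 := bs_succ Q v w hQ 0
        have e2 := bs_succ Q 1 α hQ 0
        simp [gs, h1, PowerSeries.coeff_mul, Finset.Nat.antidiagonal_succ, bs] at *
        linear_combination -e1 - e2
    | succ n ih =>
      refine ⟨ih.2, ?_⟩
      have := gs_rec Q v w α hQ n
      rw [show n+1+1 = n+2 from rfl, h n, ih.1, ih.2, Finset.prod_range_succ _ (n+1)]
      rw [show n+1+1 = n+2 from rfl]
      rw [Finset.prod_range_succ _ n]
      linear_combination -(∏ k ∈ Finset.range n, (1 - Q^(k+1))) * (1 - Q^(n+1)) * this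
  exact (key n).1

theorem sum_bs (q v w Q : R) (M : ℕ) (hM : 0 < M) (hq : q^M = 0) (hQ : Q = q^4)
    (hv : q ∣ v) (hw : q ∣ w) :
    (∑ i ∈ Finset.range (2*M+1), bs Q v w i) * ∏ k ∈ Finset.range M, (1 - v*Q^k)
      = ∏ k ∈ Finset.range M, (1 + w*Q^k) := by
  have hnil : IsNilpotent Q := ⟨M, by rw [hQ, ← pow_mul, mul_comm, pow_mul, hq, zero_pow (by norm_num)]⟩
  have hb : ∀ i, M ≤ i → bs Q v w i = 0 := fun i hi => by
    have := bs_dvd q v w Q hv hw i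
    rw [pow_eq_zero_of_le hi hq] at this
    exact zero_dvd_iff.mp this
  set Sg : ℕ → R := fun k => ∑ i ∈ Finset.range (2*M+1), bs Q v w i * (Q^k)^i with hSg
  have step : ∀ k, (1 - v*Q^k) * Sg k = (1 + w*Q^k) * Sg (k+1) := by
    intro k
    have e1 : Sg k - Sg (k+1) = ∑ i ∈ Finset.range (2*M+1), bs Q v w i * (1 - Q^i) * (Q^k)^i := by
      rw [hSg]
      simp only
      rw [← Finset.sum_sub_distrib]
      refine Finset.sum_congr rfl fun i _ => ?_
      ring
    have e2 : v * Q^k * Sg k + w*Q^k*Sg (k+1) = ∑ i ∈ Finset.range (2*M+1), bs Q v w (i+1) * (1 - Q^(i+1)) * (Q^k)^(i+1) := by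
      rw [hSg]
      simp only
      rw [Finset.mul_sum, Finset.mul_sum, ← Finset.sum_add_distrib]
      refine Finset.sum_congr rfl fun i _ => ?_
      rw [bs_succ Q v w hnil]
      ring
    have e3 := Finset.sum_range_succ (fun i => bs Q v w i * (1 - Q^i) * (Q^k)^i) (2*M+1)
    have e4 := Finset.sum_range_succ' (fun i => bs Q v w i * (1 - Q^i) * (Q^k)^i) (2*M+1)
    rw [e3, hb (2*M+1) (by omega)] at e4
    simp at e4
    linear_combination e1 + e4 - e2
  have tele : ∀ K, Sg 0 * ∏ k ∈ Finset.range K, (1 - v*Q^k) = (∏ k ∈ Finset.range K, (1 + w*Q^k)) * Sg K := by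
    intro K
    induction K with
    | zero => simp
    | succ K ih =>
      rw [Finset.prod_range_succ, Finset.prod_range_succ]
      linear_combination (1 - v*Q^K) * ih + (∏ k ∈ Finset.range K, (1 + w*Q^k)) * step K
  have hQM : Q^M = 0 := by rw [hQ, ← pow_mul, mul_comm, pow_mul, hq, zero_pow (by norm_num)]
  have hlast : Sg M = 1 := by
    simp [hSg, hQM, Finset.sum_range_succ', bs]
  have := tele M
  rw [hlast, mul_one] at this
  rw [← this]
  simp [hSg]

theorem bs_one_eq (Q α : R) (hQ : IsNilpotent Q) (n : ℕ) :
    (∏ k ∈ Finset.range n, (1 - Q^(k+1))) * bs Q 1 α n = ∏ k ∈ Finset.range n, (1 + α*Q^k) := by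
  induction n with
  | zero => simp [bs]
  | succ n ih =>
    rw [Finset.prod_range_succ, Finset.prod_range_succ, ← ih]
    linear_combination (∏ k ∈ Finset.range n, (1 - Q^(k+1))) * bs_succ Q 1 α hQ n

theorem prod_stab (f : ℕ → R) (M N : ℕ) (hMN : M ≤ N) (hf : ∀ k, M ≤ k → f k = 1) :
    ∏ k ∈ Finset.range N, f k = ∏ k ∈ Finset.range M, f k := by
  symm
  apply Finset.prod_subset (Finset.range_subset_range.mpr hMN)
  intro x _ hx
  exact hf x (by simpa using hx)

theorem alg_main (q y z : R) (M : ℕ) (hM : 0 < M) (hq : q^M = 0) (U V : ℕ → R)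
    (hU0 : U 0 = 1) (hV0 : V 0 = 1)
    (hU1 : ∀ k, U (2*k+1) = U (2*k) + z*q^(2*k+1) * V (2*k+1))
    (hV1 : ∀ k, V (2*k+1) = y * V (2*k) + z*q^(2*k+1) * U (2*k+1))
    (hU2 : ∀ k, U (2*k+2) = U (2*k+1) + q^(2*k+2) * V (2*k+2))
    (hV2 : ∀ k, V (2*k+2) = y * V (2*k+1) + q^(2*k+2) * U (2*k+2)) :
    U (2*(2*M)) * ∏ j ∈ Finset.range (2*M),
      ((1 - q^(4*(j+1))) * (1 - z^2*q^(4*(j+1)-2)) * (1 - y^2*q^(4*(j+1)-2)))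
     = ∏ j ∈ Finset.range (2*M), (1 + y*z*q^(2*(j+1)-1)) := by
  set Q := q^4 with hQdef
  set v := y^2*q^2 with hv
  set w := z*y*q^3 with hw
  set α := z*y*q with hα
  have hQM : Q^M = 0 := by rw [hQdef, ← pow_mul, mul_comm, pow_mul, hq, zero_pow (by norm_num)]
  have hnil : IsNilpotent Q := ⟨M, hQM⟩
  have hz : ∀ k, M ≤ k → Q^k = 0 := fun k hk => pow_eq_zero_of_le hk hQM
  set Dn : ℕ → R := fun n => ∏ j ∈ Finset.range n, ((1 - z^2*q^(4*j+2)) * (1 - q^(4*j+4))) with hDn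
  set E : ℕ → R := fun n => U (2*n) * Dn n with hE
  set F : ℕ → R := fun n => V (2*n) * Dn n with hF
  have hEr : ∀ k, E (k+1) = (1 + z*y*q^(4*k+3)) * E k + q^(2*k) * (z*y*q + y^2*q^2) * F k := by
    intro k
    have := (aux_elim q y z U V hU1 hV1 hU2 hV2 k).1
    simp only [hE, hF, hDn, Finset.prod_range_succ, show 2*(k+1) = 2*k+2 by ring]
    linear_combination (∏ j ∈ Finset.range k, ((1 - z^2*q^(4*j+2)) * (1 - q^(4*j+4)))) * this
  have hFr : ∀ k, F (k+1) = (y^2 + z*y*q^(4*k+3)) * F k + q^(2*k) * (z*y*q + q^2) * E k := by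
    intro k
    have := (aux_elim q y z U V hU1 hV1 hU2 hV2 k).2
    simp only [hE, hF, hDn, Finset.prod_range_succ, show 2*(k+1) = 2*k+2 by ring]
    linear_combination (∏ j ∈ Finset.range k, ((1 - z^2*q^(4*j+2)) * (1 - q^(4*j+4)))) * this
  have hE0 : E 0 = 1 := by simp [hE, hDn, hU0]
  have hF0 : F 0 = 1 := by simp [hF, hDn, hV0]
  have hE1 : E 1 = 1 + α + v + w := by
    have := hEr 0
    rw [hE0, hF0] at this
    rw [show (1:ℕ) = 0+1 from rfl, this, hα, hv, hw]
    ring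
  have h3 := three_term q y z E F hEr hFr
  have hEM := E_eq Q v w α hnil E hE0 hE1 h3 (2*M)
  have ha : ∀ j, bs Q 1 α (M + j) = bs Q 1 α M := by
    intro j
    induction j with
    | zero => rfl
    | succ j ih =>
      have := bs_succ Q 1 α hnil (M+j)
      rw [hz (M+j+1) (by omega), hz (M+j) (by omega), ih] at this
      rw [← add_assoc]
      simpa using this
  have hqv : q ∣ v := ⟨y^2*q, by rw [hv]; ring⟩
  have hqw : q ∣ w := ⟨z*y*q^2, by rw [hw]; ring⟩
  have hb : ∀ i, M ≤ i → bs Q v w i = 0 := fun i hi => by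
    have := bs_dvd q v w Q hqv hqw i
    rw [pow_eq_zero_of_le hi hq] at this
    exact zero_dvd_iff.mp this
  have hg : gs Q v w α (2*M) = (∑ i ∈ Finset.range (2*M+1), bs Q v w i) * bs Q 1 α M := by
    rw [gs, PowerSeries.coeff_mul, Finset.Nat.sum_antidiagonal_eq_sum_range_succ_mk, Finset.sum_mul]
    refine Finset.sum_congr rfl fun i hi => ?_
    simp only [PowerSeries.coeff_mk]
    by_cases h : M ≤ i
    · rw [hb i h]; simp
    · rw [show 2*M - i = M + (M - i) by omega, ha]
  rw [hg, prod_stab (fun k => 1 - Q^(k+1)) M (2*M) (by omega) (fun k hk => by rw [hz (k+1) (by omega)]; simp)] at hEM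
  have hS := sum_bs q v w Q M hM hq hQdef hqv hqw
  have hA := bs_one_eq Q α hnil M
  have hV : ∏ k ∈ Finset.range (2*M), (1 - v*Q^k) = ∏ k ∈ Finset.range M, (1 - v*Q^k) :=
    prod_stab _ M (2*M) (by omega) (fun k hk => by rw [hz k hk]; simp)
  have hnum : ∀ n, ∏ j ∈ Finset.range (2*n), (1 + y*z*q^(2*(j+1)-1)) =
      (∏ k ∈ Finset.range n, (1 + α*Q^k)) * ∏ k ∈ Finset.range n, (1 + w*Q^k) := by
    intro n
    induction n with
    | zero => simp
    | succ n ih =>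
      rw [show 2*(n+1) = 2*n+1+1 by ring, Finset.prod_range_succ, Finset.prod_range_succ, ih,
        Finset.prod_range_succ, Finset.prod_range_succ,
        show 2*(2*n+1)-1 = 4*n+1 by omega, show 2*(2*n+1+1)-1 = 4*n+3 by omega, hα, hw, hQdef]
      ring
  have hden : ∏ j ∈ Finset.range (2*M),
      ((1 - q^(4*(j+1))) * (1 - z^2*q^(4*(j+1)-2)) * (1 - y^2*q^(4*(j+1)-2)))
      = Dn (2*M) * ∏ k ∈ Finset.range (2*M), (1 - v*Q^k) := by
    rw [hDn, ← Finset.prod_mul_distrib]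
    refine Finset.prod_congr rfl fun j _ => ?_
    rw [show 4*(j+1)-2 = 4*j+2 by omega, hv, hQdef]
    ring
  rw [hden, hnum M, hV, ← hS, ← hA, ← mul_assoc]
  change E (2*M) * _ = _
  rw [hEM]
  ring
end Alg

section Comb

theorem part_summable {f : ℕ → ℕ} (hf : IsPartitionFun f) : Summable f := by
  obtain ⟨_, N, hN⟩ := hf
  refine summable_of_ne_finset_zero (s := Finset.range N) fun i hi => hN i (by simpa using hi)

theorem shift_part {f : ℕ → ℕ} (hf : IsPartitionFun f) : IsPartitionFun (fun i => f (i+1)) := by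
  obtain ⟨h, N, hN⟩ := hf
  exact ⟨fun i j hij => h _ _ (by omega), N, fun i hi => hN _ (by omega)⟩

theorem partSum_shift {f : ℕ → ℕ} (hf : IsPartitionFun f) :
    partSum f = f 0 + partSum (fun i => f (i+1)) :=
  tsum_eq_zero_add' (part_summable (shift_part hf))

theorem supp_finite {f : ℕ → ℕ} (hf : IsPartitionFun f) (P : ℕ → Prop) (hP : ¬ P 0) :
    {i | P (f i)}.Finite := by
  obtain ⟨_, N, hN⟩ := hf
  refine (Set.finite_lt_nat N).subset fun i hi => ?_
  by_contra h
  simp only [Set.mem_ofPred_eq, not_lt] at h hi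
  exact hP (hN i h ▸ hi)

theorem ncard_shift {f : ℕ → ℕ} (hf : IsPartitionFun f) (P : ℕ → Prop) [DecidablePred P] (hP : ¬ P 0) :
    {i | P (f i)}.ncard = (if P (f 0) then 1 else 0) + {i | P (f (i+1))}.ncard := by
  have hfin := supp_finite (shift_part hf) P hP
  have e : {i | P (f i)} = (if P (f 0) then {0} else ∅) ∪ Nat.succ '' {i | P (f (i+1))} := by
    ext i
    cases i with
    | zero => by_cases h : P (f 0) <;> simp [h]
    | succ i => by_cases h : P (f 0) <;> simp [h]
  have h2 : (Nat.succ '' {i | P (f (i+1))}).ncard = {i | P (f (i+1))}.ncard :=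
    Set.ncard_image_of_injective _ Nat.succ_injective
  have h3 : (if P (f 0) then ({0} : Set ℕ) else ∅).Finite := by split_ifs <;> simp
  rw [e, Set.ncard_union_eq _ h3 (hfin.image _), h2]
  · split_ifs <;> simp
  · split_ifs <;> simp

theorem oddParts_shift {f : ℕ → ℕ} (hf : IsPartitionFun f) :
    oddParts f = (if Odd (f 0) then 1 else 0) + oddParts (fun i => f (i+1)) :=
  ncard_shift hf Odd (by decide)

theorem conj_shift {f : ℕ → ℕ} (hf : IsPartitionFun f) (i : ℕ) :
    conjFun f i = (if i + 1 ≤ f 0 then 1 else 0) + conjFun (fun i => f (i+1)) i :=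
  ncard_shift hf (fun t => i + 1 ≤ t) (by simp)

theorem conj_zero {f : ℕ → ℕ} (hf : IsPartitionFun f) (i : ℕ) (hi : f 0 ≤ i) :
    conjFun f i = 0 := by
  have : {j | i + 1 ≤ f j} = ∅ := by
    ext j
    have := hf.1 0 j (by omega)
    simp; omega
  rw [conjFun, this, Set.ncard_empty]

theorem oc_shift {f : ℕ → ℕ} (hf : IsPartitionFun f) :
    oddParts (conjFun f) + oddParts (conjFun (fun i => f (i+1))) = f 0 := by
  have hd : Disjoint {i | Odd (conjFun f i)} {i | Odd (conjFun (fun i => f (i+1)) i)} := by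
    rw [Set.disjoint_left]
    intro i h1 h2
    simp only [Set.mem_ofPred_eq] at h1 h2
    by_cases h : i + 1 ≤ f 0
    · rw [conj_shift hf, if_pos h] at h1
      rw [Nat.odd_iff] at h1 h2
      omega
    · rw [conj_zero hf i (by omega)] at h1
      simp at h1
  have hun : {i | Odd (conjFun f i)} ∪ {i | Odd (conjFun (fun i => f (i+1)) i)} = ↑(Finset.range (f 0)) := by
    ext i
    simp only [Set.mem_union, Set.mem_ofPred_eq, Finset.coe_range, Set.mem_Iio]
    by_cases h : i + 1 ≤ f 0
    · rw [conj_shift hf, if_pos h]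
      simp only [Nat.odd_iff]
      omega
    · have h3 := conj_zero hf i (by omega)
      have h4 := conj_zero (shift_part hf) i (le_trans (hf.1 0 1 (by omega)) (by omega))
      rw [h3, h4]
      simp; omega
  have hfin : ({i | Odd (conjFun f i)} ∪ {i | Odd (conjFun (fun i => f (i+1)) i)}).Finite := by
    rw [hun]; exact Finset.finite_toSet _
  unfold oddParts
  rw [← Set.ncard_union_eq hd (hfin.subset Set.subset_union_left) (hfin.subset Set.subset_union_right),
    hun, Set.ncard_coe_finset, Finset.card_range]

theorem part_le_sum {f : ℕ → ℕ} (hf : IsPartitionFun f) (i : ℕ) : f i ≤ partSum f :=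
  (part_summable hf).le_tsum i (fun _ _ => Nat.zero_le _)

theorem part_zero {f : ℕ → ℕ} (hf : IsPartitionFun f) (i : ℕ) (hi : partSum f ≤ i) : f i = 0 := by
  by_contra h
  have h1 : ∑ j ∈ Finset.range (i+1), f j ≤ partSum f :=
    (part_summable hf).sum_le_tsum _ (fun _ _ => Nat.zero_le _)
  have h2 : ∑ j ∈ Finset.range (i+1), 1 ≤ ∑ j ∈ Finset.range (i+1), f j := by
    refine Finset.sum_le_sum fun j hj => ?_
    have := hf.1 j i (by simp at hj; omega)
    omega
  simp only [Finset.sum_const, Finset.card_range, smul_eq_mul, mul_one] at h2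
  omega

theorem parts_finite (n : ℕ) : {f : ℕ → ℕ | IsPartitionFun f ∧ partSum f = n}.Finite := by
  have hfin : (Set.pi Set.univ (fun _ : Fin n => Set.Iic n)).Finite :=
    Set.Finite.pi' (fun _ => Set.finite_Iic n) |>.subset (fun g hg i => hg i trivial)
  refine Set.Finite.of_injOn (f := fun (f : ℕ → ℕ) (i : Fin n) => f i) ?_ ?_ hfin
  · rintro f ⟨hf, rfl⟩ i _
    exact part_le_sum hf i
  · rintro f ⟨hf, hfn⟩ g ⟨hg, hgn⟩ h
    funext i
    by_cases hi : i < n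
    · exact congrFun h ⟨i, hi⟩
    · rw [part_zero hf i (by omega), part_zero hg i (by omega)]

/-- Put a new first part in front. -/
def consF (N : ℕ) (g : ℕ → ℕ) : ℕ → ℕ
  | 0 => N
  | i+1 => g i

theorem consF_part {N : ℕ} {g : ℕ → ℕ} (hg : IsPartitionFun g) (h : g 0 ≤ N) :
    IsPartitionFun (consF N g) := by
  obtain ⟨h1, K, hK⟩ := hg
  refine ⟨?_, K+1, ?_⟩
  · intro i j hij
    cases i with
    | zero =>
      cases j with
      | zero => exact le_rfl
      | succ j => exact (h1 0 j (by omega)).trans h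
    | succ i =>
      cases j with
      | zero => omega
      | succ j => exact h1 i j (by omega)
  · intro i hi
    cases i with
    | zero => omega
    | succ i => exact hK i (by omega)

theorem consF_shift (f : ℕ → ℕ) : consF (f 0) (fun i => f (i+1)) = f := by
  funext i
  cases i <;> rfl

/-- Bounded partitions with prescribed statistics. -/
def PP (N r n : ℕ) (P : ℕ → Prop) : Set (ℕ → ℕ) :=
  {f | IsPartitionFun f ∧ f 0 ≤ N ∧ partSum f = n ∧ oddParts f = r ∧ P (oddParts (conjFun f))}

theorem PP_finite (N r n : ℕ) (P : ℕ → Prop) : (PP N r n P).Finite :=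
  (parts_finite n).subset fun _ hf => ⟨hf.1, hf.2.2.1⟩

/-- Number of odd parts contributed by one part. -/
def ind (N : ℕ) : ℕ := if Odd N then 1 else 0

theorem PP_card (N r n : ℕ) (P : ℕ → Prop) :
    (PP (N+1) r n P).ncard = (PP N r n P).ncard +
      if ind (N+1) ≤ r ∧ N+1 ≤ n then
        (PP (N+1) (r - ind (N+1)) (n - (N+1)) (fun t => P (N+1-t))).ncard else 0 := by
  have e : PP (N+1) r n P = PP N r n P ∪ (if ind (N+1) ≤ r ∧ N+1 ≤ n then
        consF (N+1) '' (PP (N+1) (r - ind (N+1)) (n - (N+1)) (fun t => P (N+1-t))) else ∅) := by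
    ext f
    constructor
    · rintro ⟨hf, h0, hn, hr, hP⟩
      by_cases h : f 0 ≤ N
      · exact Or.inl ⟨hf, h, hn, hr, hP⟩
      · right
        have h0' : f 0 = N + 1 := by omega
        have h1 := partSum_shift hf
        have h2 := oddParts_shift hf
        have h3 := oc_shift hf
        rw [h0'] at h1 h2 h3
        change _ = ind (N+1) + _ at h2
        rw [if_pos ⟨by omega, by omega⟩]
        refine ⟨fun i => f (i+1), ⟨shift_part hf, ?_, ?_, ?_, ?_⟩, ?_⟩
        · exact h0' ▸ hf.1 0 1 (by omega)
        · omega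
        · omega
        · rw [← h3]; simpa using hP
        · rw [← h0']; exact consF_shift f
    · rintro (⟨hf, h0, hn, hr, hP⟩ | h)
      · exact ⟨hf, by omega, hn, hr, hP⟩
      · split_ifs at h with hc
        · obtain ⟨g, ⟨hg, h0, hn, hr, hP⟩, rfl⟩ := h
          have hf := consF_part hg h0
          have h1 := partSum_shift hf
          have h2 := oddParts_shift hf
          have h3 := oc_shift hf
          change _ = ind (N+1) + oddParts g at h2
          change _ = (N+1) + partSum g at h1
          change _ + oddParts (conjFun g) = (N+1) at h3
          refine ⟨hf, le_rfl, by omega, by omega, ?_⟩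
          rw [← h3] at hP
          simpa using hP
        · exact h.elim
  have hfin : (if ind (N+1) ≤ r ∧ N+1 ≤ n then
        consF (N+1) '' (PP (N+1) (r - ind (N+1)) (n - (N+1)) (fun t => P (N+1-t))) else ∅).Finite := by
    split_ifs
    · exact (PP_finite _ _ _ _).image _
    · simp
  rw [e, Set.ncard_union_eq _ (PP_finite _ _ _ _) hfin]
  · congr 1
    split_ifs
    · refine Set.ncard_image_of_injective _ fun g g' h => ?_
      funext i
      exact congrFun h (i+1)
    · simp
  · rw [Set.disjoint_left]
    rintro f ⟨_, h0, _⟩ h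
    split_ifs at h
    · obtain ⟨g, _, rfl⟩ := h
      change N + 1 ≤ N at h0
      omega
    · exact h

theorem oc_le {f : ℕ → ℕ} (hf : IsPartitionFun f) : oddParts (conjFun f) ≤ f 0 := by
  have := oc_shift hf; omega

theorem PP_congr (N r n : ℕ) {P P' : ℕ → Prop} (h : ∀ t, t ≤ N → (P t ↔ P' t)) :
    PP N r n P = PP N r n P' := by
  ext f
  constructor
  · rintro ⟨hf, h0, hn, hr, hP⟩
    exact ⟨hf, h0, hn, hr, (h _ ((oc_le hf).trans h0)).1 hP⟩
  · rintro ⟨hf, h0, hn, hr, hP⟩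
    exact ⟨hf, h0, hn, hr, (h _ ((oc_le hf).trans h0)).2 hP⟩

noncomputable def Us (N : ℕ) : PS3 := fun d => ((PP N (d 0) (d 2) (fun t => t = d 1)).ncard : ℤ)
noncomputable def Vs (N : ℕ) : PS3 := fun d => ((PP N (d 0) (d 2) (fun t => t + d 1 = N)).ncard : ℤ)

theorem coeff_Us (N : ℕ) (d : Fin 3 →₀ ℕ) : MvPowerSeries.coeff d (Us N) =
  ((PP N (d 0) (d 2) (fun t => t = d 1)).ncard : ℤ) := rfl
theorem coeff_Vs (N : ℕ) (d : Fin 3 →₀ ℕ) : MvPowerSeries.coeff d (Vs N) =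
  ((PP N (d 0) (d 2) (fun t => t + d 1 = N)).ncard : ℤ) := rfl

/-- exponent of the weight of one part -/
noncomputable def mon (N : ℕ) : Fin 3 →₀ ℕ := Finsupp.single 0 (ind N) + Finsupp.single 2 N

theorem mon0 (N : ℕ) : mon N 0 = ind N := by simp [mon]
theorem mon1 (N : ℕ) : mon N 1 = 0 := by simp [mon]
theorem mon2 (N : ℕ) : mon N 2 = N := by simp [mon]

theorem mon_le (N : ℕ) (d : Fin 3 →₀ ℕ) : mon N ≤ d ↔ ind N ≤ d 0 ∧ N ≤ d 2 := by
  rw [Finsupp.le_def, Fin.forall_fin_succ, Fin.forall_fin_succ, Fin.forall_fin_succ]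
  change (mon N 0 ≤ d 0 ∧ mon N 1 ≤ d 1 ∧ mon N 2 ≤ d 2 ∧ _) ↔ _
  simp [mon0, mon1, mon2]

theorem Us_rec (N : ℕ) :
    Us (N+1) = Us N + MvPowerSeries.monomial (mon (N+1)) 1 * Vs (N+1) := by
  ext d
  rw [map_add, MvPowerSeries.coeff_monomial_mul, coeff_Us, coeff_Us, PP_card, Nat.cast_add]
  congr 1
  simp only [mon_le, coeff_Vs, one_mul, Finsupp.tsub_apply, mon0, mon1, mon2, tsub_zero]
  rw [PP_congr (N+1) _ _ (P := fun t => N+1-t = d 1) (P' := fun t => t + d 1 = N+1)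
    (fun t ht => by omega)]
  split_ifs <;> simp

theorem Vs_rec (N : ℕ) :
    Vs (N+1) = y * Vs N + MvPowerSeries.monomial (mon (N+1)) 1 * Us (N+1) := by
  ext d
  rw [map_add, MvPowerSeries.coeff_monomial_mul, coeff_Vs, PP_card, Nat.cast_add]
  congr 1
  · rw [y, MvPowerSeries.X, MvPowerSeries.coeff_monomial_mul]
    simp only [coeff_Vs, one_mul, Finsupp.tsub_apply, Finsupp.single_le_iff]
    have z0 : (Finsupp.single (1 : Fin 3) 1) 0 = 0 := by simp
    have z1 : (Finsupp.single (1 : Fin 3) 1) 1 = 1 := by simp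
    have z2 : (Finsupp.single (1 : Fin 3) 1) 2 = 0 := by simp
    rw [z0, z1, z2, Nat.sub_zero, Nat.sub_zero]
    split_ifs with h
    · congr 3
      funext t
      apply propext
      omega
    · have : PP N (d 0) (d 2) (fun t => t + d 1 = N+1) = ∅ := by
        ext f
        simp only [Set.mem_empty_iff_false, iff_false]
        rintro ⟨hf, h0, hn, hr, hP⟩
        have := oc_le hf
        omega
      simp [this]
  · simp only [mon_le, coeff_Us, one_mul, Finsupp.tsub_apply, mon0, mon1, mon2, tsub_zero]
    rw [PP_congr (N+1) _ _ (P := fun t => N+1-t + d 1 = N+1) (P' := fun t => t = d 1)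
      (fun t ht => by omega)]
    split_ifs <;> simp

theorem zero_part : IsPartitionFun (fun _ => 0) := ⟨fun _ _ _ => le_rfl, 0, fun _ _ => rfl⟩

theorem PP_zero (r n : ℕ) (P : ℕ → Prop) (hP : P 0) :
    (PP 0 r n P).ncard = if r = 0 ∧ n = 0 then 1 else 0 := by
  have h1 : partSum (fun _ => 0) = 0 := by simp [partSum]
  have h2 : oddParts (fun _ => 0) = 0 := by simp [oddParts]
  have h3 : oddParts (conjFun (fun _ => 0)) = 0 := Nat.le_zero.mp (oc_le zero_part)
  split_ifs with h
  · rw [Set.ncard_eq_one]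
    refine ⟨fun _ => 0, ?_⟩
    ext f
    constructor
    · rintro ⟨hf, h0, _⟩
      funext i
      have := hf.1 0 i (by omega)
      omega
    · rintro rfl
      exact ⟨zero_part, le_rfl, by omega, by omega, by rw [h3]; exact hP⟩
  · have : PP 0 r n P = ∅ := by
      ext f
      simp only [Set.mem_empty_iff_false, iff_false]
      rintro ⟨hf, h0, hn, hr, _⟩
      have : f = fun _ => 0 := by
        funext i
        have := hf.1 0 i (by omega)
        omega
      subst this
      omega
    simp [this]

theorem d_zero (d : Fin 3 →₀ ℕ) : d = 0 ↔ d 0 = 0 ∧ d 1 = 0 ∧ d 2 = 0 := by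
  rw [Finsupp.ext_iff, Fin.forall_fin_succ, Fin.forall_fin_succ, Fin.forall_fin_succ]
  simp

theorem PP_zero_empty (r n : ℕ) (P : ℕ → Prop) (hP : ¬ P 0) : PP 0 r n P = ∅ := by
  ext f
  simp only [Set.mem_empty_iff_false, iff_false]
  rintro ⟨hf, h0, hn, hr, h⟩
  have := oc_le hf
  rw [show oddParts (conjFun f) = 0 by omega] at h
  exact hP h

theorem Us_zero : Us 0 = 1 := by
  ext d
  rw [coeff_Us, MvPowerSeries.coeff_one]
  by_cases h : d 1 = 0
  · rw [PP_zero _ _ _ h.symm]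
    simp [d_zero, h]
  · rw [PP_zero_empty _ _ _ (fun h' => h h'.symm)]
    simp [d_zero, h]

theorem Vs_zero : Vs 0 = 1 := by
  ext d
  rw [coeff_Vs, MvPowerSeries.coeff_one]
  by_cases h : d 1 = 0
  · rw [PP_zero _ _ _ (by omega)]
    simp [d_zero, h]
  · rw [PP_zero_empty _ _ _ (by omega)]
    simp [d_zero, h]

theorem mon_odd (k : ℕ) : MvPowerSeries.monomial (mon (2*k+1)) (1:ℤ) = z * q^(2*k+1) := by
  rw [z, q, MvPowerSeries.X_pow_eq, MvPowerSeries.X, MvPowerSeries.monomial_mul_monomial, mon,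
    ind, if_pos ⟨k, rfl⟩, one_mul]

theorem mon_even (k : ℕ) : MvPowerSeries.monomial (mon (2*k+2)) (1:ℤ) = q^(2*k+2) := by
  rw [q, MvPowerSeries.X_pow_eq, mon, ind, if_neg (by rw [Nat.not_odd_iff_even]; exact ⟨k+1, by ring⟩)]
  simp

theorem lhs_congr (M N : ℕ) (h : M ≤ N) : q^M ∣ lhsSeries - Us N := by
  rw [q, MvPowerSeries.X_pow_dvd_iff]
  intro d hd
  rw [map_sub, coeff_Us, sub_eq_zero]
  change ((S (d 0) (d 1) (d 2) : ℕ) : ℤ) = _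
  congr 1
  unfold S
  congr 1
  ext f
  constructor
  · rintro ⟨hf, hn, hr, hs⟩
    exact ⟨hf, by have := part_le_sum hf 0; omega, hn, hr, hs⟩
  · rintro ⟨hf, h0, hn, hr, hs⟩
    exact ⟨hf, hn, hr, hs⟩

/-- The denominator. -/
noncomputable def den (j : ℕ) : PS3 :=
  (1 - q ^ (4 * (j + 1))) * (1 - z ^ 2 * q ^ (4 * (j + 1) - 2)) *
        (1 - y ^ 2 * q ^ (4 * (j + 1) - 2))

theorem factor_den (j : ℕ) : factor j * den j = 1 + y * z * q ^ (2 * (j + 1) - 1) := by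
  rw [factor, mul_assoc, mul_comm (MvPowerSeries.invOfUnit _ _)]
  change _ * (den j * MvPowerSeries.invOfUnit (den j) 1) = _
  rw [MvPowerSeries.mul_invOfUnit, mul_one]
  simp [den, q, show 4 * (j+1) - 2 ≠ 0 by omega]

theorem main_congr (M : ℕ) (hM : 0 < M) (s : Finset ℕ) (hs : Finset.range (2*M) ⊆ s) :
    q^M ∣ lhsSeries - ∏ j ∈ s, factor j := by
  set I := Ideal.span {q^M} with hI
  set φ := Ideal.Quotient.mk I with hφ
  have hq : (φ q)^M = 0 := by
    rw [← map_pow, hφ, Ideal.Quotient.eq_zero_iff_mem, hI]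
    exact Ideal.mem_span_singleton_self _
  have h1 := alg_main (φ q) (φ y) (φ z) M hM hq (fun n => φ (Us n)) (fun n => φ (Vs n))
    (by simp [Us_zero]) (by simp [Vs_zero])
    (fun k => by simp only [← map_mul, ← map_pow, ← map_add]; rw [Us_rec (2*k), mon_odd])
    (fun k => by simp only [← map_mul, ← map_pow, ← map_add]; rw [Vs_rec (2*k), mon_odd])
    (fun k => by simp only [← map_mul, ← map_pow, ← map_add]; rw [Us_rec (2*k+1), mon_even])
    (fun k => by simp only [← map_mul, ← map_pow, ← map_add]; rw [Vs_rec (2*k+1), mon_even])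
  have hnil : ∀ (x : PS3) (n : ℕ), 0 < n → IsNilpotent (φ x * φ q ^ n) := fun x n hn =>
    Commute.isNilpotent_mul_left (Commute.all _ _) (IsNilpotent.pow_of_pos ⟨M, hq⟩ (by omega))
  have hden : ∀ j, φ (den j) = (1 - (φ q)^(4*(j+1))) * (1 - (φ z)^2*(φ q)^(4*(j+1)-2))
      * (1 - (φ y)^2*(φ q)^(4*(j+1)-2)) := by
    intro j; simp [den]
  have hunit : ∀ j, IsUnit (φ (den j)) := by
    intro j
    rw [hden]
    refine IsUnit.mul (IsUnit.mul ?_ ?_) ?_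
    · simpa using (hnil 1 (4*(j+1)) (by omega)).isUnit_one_sub
    · rw [← map_pow φ z]; exact (hnil (z^2) (4*(j+1)-2) (by omega)).isUnit_one_sub
    · rw [← map_pow φ y]; exact (hnil (y^2) (4*(j+1)-2) (by omega)).isUnit_one_sub
  have hfd : ∀ j, φ (factor j) * φ (den j) = 1 + φ y * φ z * φ q ^ (2*(j+1)-1) := by
    intro j
    rw [← map_mul, factor_den]; simp
  have hone : ∀ j, M ≤ j → φ (factor j) = 1 := by
    intro j hj
    have h := hfd j
    rw [hden, pow_eq_zero_of_le (show M ≤ 4*(j+1) by omega) hq,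
      pow_eq_zero_of_le (show M ≤ 4*(j+1)-2 by omega) hq,
      pow_eq_zero_of_le (show M ≤ 2*(j+1)-1 by omega) hq] at h
    simpa using h
  have h2 : φ (∏ j ∈ s, factor j) = ∏ j ∈ Finset.range (2*M), φ (factor j) := by
    rw [map_prod]
    symm
    refine Finset.prod_subset hs fun j _ hj => hone j ?_
    simp at hj; omega
  have h3 : φ lhsSeries = φ (Us (2*(2*M))) := by
    rw [hφ, Ideal.Quotient.mk_eq_mk_iff_sub_mem, hI, Ideal.mem_span_singleton]
    exact lhs_congr _ _ (by omega)
  rw [← Ideal.mem_span_singleton, ← hI, ← Ideal.Quotient.mk_eq_mk_iff_sub_mem]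
  change φ _ = φ _
  rw [h2, h3]
  have hu : IsUnit (∏ j ∈ Finset.range (2*M), φ (den j)) := by
    rw [← map_prod]
    rw [map_prod]
    exact (IsUnit.prod_iff).2 (fun j _ => hunit j)
  apply hu.mul_right_cancel
  rw [← Finset.prod_mul_distrib, Finset.prod_congr rfl (fun j _ => hfd j), ← h1]
  congr 1

theorem main_hasProd : HasProd factor lhsSeries := by
  rw [HasProd]
  refine tendsto_pi_nhds.2 fun d => ?_
  refine tendsto_const_nhds.congr' ?_
  simp only [SummationFilter.unconditional_filter]
  filter_upwards [Filter.eventually_ge_atTop (Finset.range (2*(d 2 + 1)))] with s hs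
  have h := main_congr (d 2 + 1) (by omega) s hs
  rw [q, MvPowerSeries.X_pow_dvd_iff] at h
  have := h d (by omega)
  rw [map_sub, sub_eq_zero] at this
  exact this

end Comb

/-- Andrews' identity: `∑_{n,r,s≥0} S(r,s;n) zʳ yˢ qⁿ
  = ∏_{j≥1} (1 + yzq^{2j−1}) / ((1 − q^{4j})(1 − z²q^{4j−2})(1 − y²q^{4j−2}))`
as formal power series in `ℤ[[z,y,q]]`, the infinite product being the convergent
(coefficientwise) product of formal power series. -/
theorem andrews_stanley_identity : lhsSeries = ∏' j : ℕ, factor j := by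
  have : T2Space PS3 := inferInstanceAs (T2Space (((Fin 3) →₀ ℕ) → ℤ))
  exact main_hasProd.tprod_eq.symm
end

section
/- Every partition κ can be written uniquely as the union λ ∪ μ of a partition λ in which no odd part is repeated and a partition μ all of whose parts are odd and occur with even multiplicity. Explicitly, λ = ⟨1^{P(m₁(κ))} 2^{m₂(κ)} 3^{P(m₃(κ))} 4^{m₄(κ)} ⋯⟩ and μ = ⟨1^{m₁(κ)−P(m₁(κ))} 3^{m₃(κ)−P(m₃(κ))} 5^{m₅(κ)−P(m₅(κ))} ⋯⟩, where P(i) is 0 if i is even and 1 if i is odd. In other words, the map α(κ) = (λ, μ) is a bijection from the set 𝒫 of all partitions onto 𝒜 × ℬ, where 𝒜 is the set of partitions with no repeated odd part and ℬ is the set of partitions having only odd parts, each of even multiplicity. -/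
/-- A partition, modeled as a finite multiset of positive integers (its parts);
`κ.count k` is the multiplicity `m_k(κ)`, and the union of two partitions is
multiset addition (merging the parts). -/
def IsPartitionM (κ : Multiset ℕ) : Prop := ∀ x ∈ κ, 0 < x

/-- `𝒜`: partitions with no repeated odd part. -/
def memA (lam : Multiset ℕ) : Prop :=
  IsPartitionM lam ∧ ∀ k, Odd k → lam.count k ≤ 1

/-- `ℬ`: partitions having only odd parts, each of even multiplicity. -/
def memB (mu : Multiset ℕ) : Prop :=
  IsPartitionM mu ∧ (∀ x ∈ mu, Odd x) ∧ ∀ k, Even (mu.count k)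

/-- Every partition `κ` can be written uniquely as the union `λ ∪ μ` of a partition
`λ ∈ 𝒜` (no repeated odd part) and a partition `μ ∈ ℬ` (only odd parts, of even
multiplicity); i.e. `α : κ ↦ (λ, μ)` is a bijection `𝒫 → 𝒜 × ℬ`.  Explicitly, the
unique such pair is given by `m_k(λ) = P(m_k(κ))` for odd `k`, `m_k(λ) = m_k(κ)` for
even `k`, and `m_k(μ) = m_k(κ) − P(m_k(κ))` for odd `k`, `m_k(μ) = 0` for even `k`,
where `P(m) = m % 2` is the parity function. -/
theorem alpha_bijection (κ : Multiset ℕ) (hκ : IsPartitionM κ) :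
    (∃! p : Multiset ℕ × Multiset ℕ, memA p.1 ∧ memB p.2 ∧ p.1 + p.2 = κ) ∧
    (∀ lam mu : Multiset ℕ, memA lam → memB mu → lam + mu = κ →
      (∀ k, lam.count k = if Odd k then κ.count k % 2 else κ.count k) ∧
      (∀ k, mu.count k = if Odd k then κ.count k - κ.count k % 2 else 0)) := by
  have key : ∀ lam mu : Multiset ℕ, memA lam → memB mu → lam + mu = κ →
      (∀ k, lam.count k = if Odd k then κ.count k % 2 else κ.count k) ∧
      (∀ k, mu.count k = if Odd k then κ.count k - κ.count k % 2 else 0) := by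
    intro lam mu hA hB h
    have main : ∀ k, (lam.count k = if Odd k then κ.count k % 2 else κ.count k) ∧
        (mu.count k = if Odd k then κ.count k - κ.count k % 2 else 0) := by
      intro k
      have hc : lam.count k + mu.count k = κ.count k := by
        rw [← h, Multiset.count_add]
      obtain ⟨c, hc2⟩ := hB.2.2 k
      by_cases hk : Odd k
      · have h1 := hA.2 k hk
        simp only [hk, if_true]
        omega
      · have h0 : mu.count k = 0 :=
          Multiset.count_eq_zero.2 fun hm => hk (hB.2.1 k hm)
        simp only [hk, if_false]
        omega
    exact ⟨fun k => (main k).1, fun k => (main k).2⟩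
  refine ⟨?_, key⟩
  obtain ⟨mu, hmu⟩ : ∃ mu : Multiset ℕ, ∀ k,
      mu.count k = if Odd k then κ.count k - κ.count k % 2 else 0 := by
    refine ⟨∑ j ∈ κ.toFinset,
      Multiset.replicate (if Odd j then κ.count j - κ.count j % 2 else 0) j, fun k => ?_⟩
    rw [Multiset.count_sum']
    simp only [Multiset.count_replicate]
    rw [Finset.sum_ite_eq']
    by_cases hm : k ∈ κ
    · simp [hm]
    · simp [hm]
  have hle : mu ≤ κ := by
    rw [Multiset.le_iff_count]
    intro k
    rw [hmu k]
    split_ifs <;> omega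
  refine ⟨(κ - mu, mu), ⟨⟨fun x hx => hκ x (Multiset.mem_of_le (Multiset.sub_le_self _ _) hx),
    ?_⟩, ⟨fun x hx => hκ x (Multiset.mem_of_le hle hx), ?_, ?_⟩,
    Multiset.sub_add_cancel hle⟩, ?_⟩
  · intro k hk
    have h1 := hmu k
    simp only [hk, if_true] at h1
    simp only [Multiset.count_sub]
    omega
  · intro x hx
    by_contra hk
    have h1 := hmu x
    simp only [hk, if_false] at h1
    exact Multiset.count_eq_zero.1 h1 hx
  · intro k
    have h1 := hmu k
    rw [Nat.even_iff]
    split_ifs at h1 <;> simp only [h1] <;> omega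
  · rintro ⟨l, m⟩ ⟨hA, hB, h⟩
    have hm : m = mu := by
      ext k
      rw [(key l m hA hB h).2 k, hmu k]
    subst hm
    simp only at h
    rw [← h, Multiset.add_sub_cancel_right]
end

section
/- Let κ be a partition and let α(κ) = (λ, μ), where λ = ⟨1^{P(m₁(κ))} 2^{m₂(κ)} 3^{P(m₃(κ))} 4^{m₄(κ)} ⋯⟩ and μ = ⟨1^{m₁(κ)−P(m₁(κ))} 3^{m₃(κ)−P(m₃(κ))} ⋯⟩. Then the number of odd parts of λ equals the number of distinct odd integers occurring in κ with odd multiplicity, and the number of parts of μ equals the number of odd parts of μ, which equals 𝒪(κ) minus the number of distinct odd integers occurring in κ with odd multiplicity. -/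
/-- `𝒪(κ)`: the number of odd parts of the partition `κ`. -/
def oddPartsM (κ : Multiset ℕ) : ℕ := (κ.filter (fun x => Odd x)).card

/-- The number of distinct odd integers occurring in `κ` with odd multiplicity. -/
def oddMultOdd (κ : Multiset ℕ) : ℕ :=
  (κ.toFinset.filter (fun k => Odd k ∧ Odd (κ.count k))).card

/-- Let `α(κ) = (λ, μ)` where `λ` takes, for each odd `k`, `P(m_k(κ)) = m_k(κ) % 2`
copies of `k` and, for each even `k`, all `m_k(κ)` copies of `k`, while `μ` takes the
remaining `m_k(κ) − P(m_k(κ))` copies of each odd `k`.  Then `𝒪(λ)` equals the number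
`t` of distinct odd integers occurring in `κ` with odd multiplicity, and
`l(μ) = 𝒪(μ) = 𝒪(κ) − t`. -/
theorem alpha_statistics (κ lam mu : Multiset ℕ) (hκ : IsPartitionM κ)
    (hlam : ∀ k, lam.count k = if Odd k then κ.count k % 2 else κ.count k)
    (hmu : ∀ k, mu.count k = if Odd k then κ.count k - κ.count k % 2 else 0) :
    oddPartsM lam = oddMultOdd κ ∧
    Multiset.card mu = oddPartsM mu ∧
    oddPartsM mu = oddPartsM κ - oddMultOdd κ := by
  have h1 : lam.filter (fun x => Odd x)
      = (κ.toFinset.filter (fun k => Odd k ∧ Odd (κ.count k))).val := by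
    ext k
    rw [Multiset.count_filter, hlam, Multiset.count_eq_of_nodup (Finset.nodup _)]
    simp only [Finset.mem_val, Finset.mem_filter, Multiset.mem_toFinset]
    by_cases hk : Odd k
    · by_cases hc : Odd (κ.count k)
      · have hm : k ∈ κ := Multiset.count_pos.mp hc.pos
        simp [hk, hc, hm, Nat.odd_iff.mp hc]
      · simp [hk, hc, Nat.even_iff.mp (Nat.not_odd_iff_even.mp hc)]
    · simp [hk]
  have h2 : mu.filter (fun x => Odd x) = mu := by
    ext k
    rw [Multiset.count_filter, hmu]
    split_ifs <;> rfl
  have h3 : κ.filter (fun x => Odd x) = mu + lam.filter (fun x => Odd x) := by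
    ext k
    rw [Multiset.count_add, Multiset.count_filter, Multiset.count_filter, hmu, hlam]
    split_ifs
    · have := Nat.mod_le (κ.count k) 2
      omega
    · rfl
  have e1 : oddPartsM lam = oddMultOdd κ := by
    unfold oddPartsM oddMultOdd
    rw [h1]
    rfl
  have e2 : Multiset.card mu = oddPartsM mu := by
    unfold oddPartsM
    rw [h2]
  have e3 : oddPartsM κ = Multiset.card mu + oddPartsM lam := by
    unfold oddPartsM
    rw [h3, Multiset.card_add]
  exact ⟨e1, e2, by omega⟩
end

section
/- Let λ = (λ₁, λ₂, …) be a partition with no repeated odd part, and define the sequence ζ = (ζ₁, ζ₂, …) by ζ_{2i−1} = ⌊(λ_i + 1)/2⌋ and ζ_{2i} = ⌊λ_i/2⌋ for all i ≥ 1. Then ζ is a partition (the sequence ζ is nonincreasing), and ζ satisfies ζ_{2i−1} − ζ_{2i} ≤ 1 for all i ≥ 1. -/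
/-- A partition has no repeated odd part: every odd integer occurs at most once
among its parts. -/
def NoRepeatedOddPart (f : ℕ → ℕ) : Prop :=
  ∀ i j, i ≠ j → Odd (f i) → f i ≠ f j

/-- Let `λ` be a partition with no repeated odd part and define `ζ` by
`ζ_{2i−1} = ⌊(λ_i + 1)/2⌋` and `ζ_{2i} = ⌊λ_i/2⌋` (in zero-based indexing:
`ζ(2i) = (λ(i) + 1)/2` and `ζ(2i+1) = λ(i)/2`).  Then `ζ` is a partition
(nonincreasing with finitely many nonzero terms) and `ζ_{2i−1} − ζ_{2i} ≤ 1`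
for all `i ≥ 1`. -/
theorem beta_one_lands_in_C (lam zeta : ℕ → ℕ)
    (hlam : IsPartitionFun lam) (hodd : NoRepeatedOddPart lam)
    (hzeta : ∀ i, zeta (2 * i) = (lam i + 1) / 2 ∧ zeta (2 * i + 1) = lam i / 2) :
    IsPartitionFun zeta ∧ ∀ i, zeta (2 * i) ≤ zeta (2 * i + 1) + 1 := by
  obtain ⟨hmono, N, hN⟩ := hlam
  refine ⟨⟨?_, 2 * N, ?_⟩, ?_⟩
  · have hanti : Antitone zeta := by
      apply antitone_nat_of_succ_le
      intro n
      obtain ⟨i, hi | hi⟩ := Nat.even_or_odd' n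
      · subst hi
        have h := hzeta i
        omega
      · subst hi
        have h := hzeta i
        have h' := (hzeta (i + 1)).1
        have hm := hmono i (i + 1) (by omega)
        have ho := hodd i (i + 1) (by omega)
        rw [Nat.odd_iff] at ho
        have e : 2 * i + 1 + 1 = 2 * (i + 1) := by ring
        rw [e, h', h.2]
        by_cases hc : lam i % 2 = 1
        · have := ho hc
          omega
        · omega
    intro i j hij
    exact hanti hij
  · intro n hn
    obtain ⟨i, hi | hi⟩ := Nat.even_or_odd' n
    · subst hi
      have h := hzeta i
      have := hN i (by omega)
      omega
    · subst hi
      have h := hzeta i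
      have := hN i (by omega)
      omega
  · intro i
    have h := hzeta i
    omega
end

section
/- Let λ be a partition with no repeated odd part and let ζ = β₁(λ) be the partition with ζ_{2i−1} = ⌊(λ_i + 1)/2⌋ and ζ_{2i} = ⌊λ_i/2⌋. Then the number of odd parts of ζ equals twice the number of parts of λ congruent to 2 modulo 4 plus the number of odd parts of λ. -/
open Classical in
theorem ncard_eq_sum_aux (P : ℕ → Prop) (N : ℕ) (h : ∀ i, P i → i < N) :
    {i | P i}.ncard = ∑ i ∈ Finset.range N, if P i then 1 else 0 := by
  have : {i | P i} = ((Finset.range N).filter P : Set ℕ) := by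
    ext i
    simp only [Set.mem_setOf_eq, Finset.coe_filter, Finset.mem_range]
    exact ⟨fun hi => ⟨h i hi, hi⟩, fun hi => hi.2⟩
  rw [this, Set.ncard_coe_finset, Finset.card_filter]

theorem sum_range_two_mul_aux (f : ℕ → ℕ) (N : ℕ) :
    ∑ i ∈ Finset.range (2 * N), f i = ∑ i ∈ Finset.range N, (f (2 * i) + f (2 * i + 1)) := by
  induction N with
  | zero => simp
  | succ k ih =>
    rw [show 2 * (k + 1) = 2 * k + 1 + 1 by ring, Finset.sum_range_succ, Finset.sum_range_succ,
      Finset.sum_range_succ, ih, add_assoc]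

/-- Let `λ` be a partition with no repeated odd part and let `ζ = β₁(λ)`, i.e.
`ζ_{2i−1} = ⌊(λ_i + 1)/2⌋`, `ζ_{2i} = ⌊λ_i/2⌋` (zero-based: `ζ(2i) = (λ(i)+1)/2`,
`ζ(2i+1) = λ(i)/2`).  Then the number of odd parts of `ζ` equals twice the number of
parts of `λ` congruent to `2 (mod 4)` plus the number of odd parts of `λ`. -/
theorem oddParts_beta_one (lam zeta : ℕ → ℕ)
    (hlam : IsPartitionFun lam) (hodd : NoRepeatedOddPart lam)
    (hzeta : ∀ i, zeta (2 * i) = (lam i + 1) / 2 ∧ zeta (2 * i + 1) = lam i / 2) :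
    oddParts zeta = 2 * {i : ℕ | lam i % 4 = 2}.ncard + oddParts lam := by
  classical
  obtain ⟨-, N, hN⟩ := hlam
  unfold oddParts
  rw [ncard_eq_sum_aux (fun i => Odd (zeta i)) (2 * N), ncard_eq_sum_aux (fun i => lam i % 4 = 2) N,
    ncard_eq_sum_aux (fun i => Odd (lam i)) N, sum_range_two_mul_aux, Finset.mul_sum,
    ← Finset.sum_add_distrib]
  · refine Finset.sum_congr rfl fun i _ => ?_
    simp only [(hzeta i).1, (hzeta i).2, Nat.odd_iff]
    split_ifs <;> omega
  · intro i hi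
    by_contra hc
    have := hN i (by omega)
    simp [this] at hi
  · intro i hi
    by_contra hc
    have := hN i (by omega)
    simp [this] at hi
  · intro i hi
    by_contra hc
    have h0 := hN (i / 2) (by omega)
    have h1 := hzeta (i / 2)
    rw [h0] at h1
    rcases Nat.mod_two_eq_zero_or_one i with h | h
    · rw [show 2 * (i / 2) = i by omega] at h1
      simp [h1.1] at hi
    · rw [show 2 * (i / 2) + 1 = i by omega] at h1
      simp [h1.2] at hi
end

section
/- Let λ be a partition with no repeated odd part and let ζ = β₁(λ) be the partition with ζ_{2i−1} = ⌊(λ_i + 1)/2⌋ and ζ_{2i} = ⌊λ_i/2⌋. Then the number of odd parts of the conjugate partition ζ′ equals the number of odd parts of λ. Equivalently, ζ′_i is odd if and only if 2i − 1 is a part of λ. -/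
/-- Let `λ` be a partition with no repeated odd part and `ζ = β₁(λ)`
(`ζ_{2i−1} = ⌊(λ_i+1)/2⌋`, `ζ_{2i} = ⌊λ_i/2⌋`).  Then `𝒪(ζ′) = 𝒪(λ)`; indeed
`ζ′_i` is odd if and only if `2i − 1` is a part of `λ` (zero-based: the `i`-th entry
of `ζ′` is odd iff `2i + 1` is a part of `λ`). -/
theorem oddParts_conj_beta_one (lam zeta : ℕ → ℕ)
    (hlam : IsPartitionFun lam) (hodd : NoRepeatedOddPart lam)
    (hzeta : ∀ i, zeta (2 * i) = (lam i + 1) / 2 ∧ zeta (2 * i + 1) = lam i / 2) :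
    oddParts (conjFun zeta) = oddParts lam ∧
    ∀ i : ℕ, Odd (conjFun zeta i) ↔ ∃ j, lam j = 2 * i + 1 := by
  obtain ⟨hmono, N, hN⟩ := hlam
  have ncard_lt : ∀ n : ℕ, {j : ℕ | j < n}.ncard = n := by
    intro n
    have : {j : ℕ | j < n} = ((Finset.range n : Finset ℕ) : Set ℕ) := by ext; simp
    rw [this, Set.ncard_coe_finset, Finset.card_range]
  have key : ∀ i : ℕ, Odd (conjFun zeta i) ↔ ∃ j, lam j = 2 * i + 1 := by
    intro i
    by_cases h : ∃ j, lam j = 2 * i + 1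
    · refine ⟨fun _ => h, fun _ => ?_⟩
      obtain ⟨a, ha⟩ := h
      have hne : ∀ k, k ≠ a → lam k ≠ 2 * i + 1 := fun k hk he =>
        hodd a k (Ne.symm hk) ⟨i, ha⟩ (by rw [ha, he])
      have hs : {j | i + 1 ≤ zeta j} = {j | j < 2 * a + 1} := by
        ext j
        simp only [Set.mem_setOf_eq]
        obtain ⟨k, hk⟩ : ∃ k, j = 2 * k ∨ j = 2 * k + 1 := ⟨j / 2, by omega⟩
        have h1 := hzeta k
        have h2 := hne k
        have h3 := hmono k a
        have h4 := hmono a k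
        rcases lt_trichotomy k a with h | h | h <;> rcases hk with rfl | rfl
        · have := h2 h.ne; have := h3 h.le; omega
        · have := h2 h.ne; have := h3 h.le; omega
        · subst h; omega
        · subst h; omega
        · have := h2 h.ne'; have := h4 h.le; omega
        · have := h2 h.ne'; have := h4 h.le; omega
      unfold conjFun
      rw [hs, ncard_lt]
      exact ⟨a, rfl⟩
    · refine ⟨fun ho => ?_, fun h' => absurd h' h⟩
      exfalso
      push Not at h
      have hex : ∃ a, lam a < 2 * i + 1 := ⟨N, by rw [hN N le_rfl]; omega⟩
      classical
      have hs : {j | i + 1 ≤ zeta j} = {j | j < 2 * Nat.find hex} := by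
        ext j
        simp only [Set.mem_setOf_eq]
        obtain ⟨k, hk⟩ : ∃ k, j = 2 * k ∨ j = 2 * k + 1 := ⟨j / 2, by omega⟩
        have h1 := hzeta k
        have h2 := h k
        have hf := Nat.find_spec hex
        by_cases hka : k < Nat.find hex
        · have := Nat.find_min hex hka
          rcases hk with rfl | rfl <;> omega
        · have := hmono _ k (not_lt.mp hka)
          rcases hk with rfl | rfl <;> omega
      unfold conjFun at ho
      rw [hs, ncard_lt] at ho
      obtain ⟨m, hm⟩ := ho
      omega
  refine ⟨?_, key⟩
  unfold oddParts
  simp only [key]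
  symm
  refine Set.ncard_congr (fun j _ => lam j / 2) ?_ ?_ ?_
  · rintro j ⟨m, hm⟩
    exact ⟨j, by omega⟩
  · rintro a b ⟨m, hm⟩ ⟨n, hn⟩ hab
    by_contra hne
    exact hodd a b hne ⟨m, hm⟩ (by omega)
  · rintro i ⟨j, hj⟩
    exact ⟨j, ⟨i, hj⟩, by omega⟩
end

section
/- Let ζ be a partition satisfying ζ_{2i−1} − ζ_{2i} ≤ 1 for all i ≥ 1, and let ξ be a partition with all terms even satisfying ξ_{2i} = ξ_{2i+1} for all i ≥ 1. Let π = ζ + ξ be their termwise sum. Then the number of odd parts of the conjugate π′ equals the number of odd parts of ζ′ plus the number of odd parts of ξ′. -/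
theorem conj_eq_iff (f : ℕ → ℕ) (hf : IsPartitionFun f) (k : ℕ) :
    ∃ c, conjFun f k = c ∧ ∀ j, k < f j ↔ j < c := by
  obtain ⟨hm, N, hN⟩ := hf
  have hex : ∃ c, f c ≤ k := ⟨N, by rw [hN N le_rfl]; exact Nat.zero_le _⟩
  have key : ∀ j, k < f j ↔ j < Nat.find hex := by
    intro j
    constructor
    · intro h
      by_contra hc
      have h1 := hm _ _ (not_lt.mp hc)
      have h2 := Nat.find_spec hex
      omega
    · intro h
      exact not_le.mp (Nat.find_min hex h)
  refine ⟨Nat.find hex, ?_, key⟩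
  have : {j | k + 1 ≤ f j} = ((Finset.range (Nat.find hex) : Finset ℕ) : Set ℕ) := by
    ext j
    simp only [Set.mem_ofPred_eq, Finset.coe_range, Set.mem_Iio]
    exact key j
  unfold conjFun
  rw [this, Set.ncard_coe_finset, Finset.card_range]

theorem oddParts_conj_eq_sum (f : ℕ → ℕ) (hf : IsPartitionFun f) (M : ℕ)
    (hM : ∀ i, M ≤ i → f i = 0) :
    oddParts (conjFun f) = ∑ i ∈ Finset.range M, (f (2 * i) - f (2 * i + 1)) := by
  have hm := hf.1
  have hset : {k | Odd (conjFun f k)} =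
      (((Finset.range M).biUnion fun i => Finset.Ico (f (2 * i + 1)) (f (2 * i)) :
        Finset ℕ) : Set ℕ) := by
    ext k
    obtain ⟨c, hc, hk⟩ := conj_eq_iff f hf k
    simp only [Set.mem_ofPred_eq, Finset.mem_coe, Finset.mem_biUnion, Finset.mem_range,
      Finset.mem_Ico, hc]
    constructor
    · rintro ⟨i, rfl⟩
      have h1 := (hk (2 * i)).2 (by omega)
      have h2 := mt (hk (2 * i + 1)).1 (by omega)
      refine ⟨i, ?_, by omega, h1⟩
      by_contra h
      have := hM (2 * i) (by omega)
      omega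
    · rintro ⟨i, -, h1, h2⟩
      have h3 := (hk (2 * i)).1 h2
      have h4 := mt (hk (2 * i + 1)).2 (by omega)
      exact ⟨i, by omega⟩
  unfold oddParts
  rw [hset, Set.ncard_coe_finset, Finset.card_biUnion]
  · simp
  · intro i _ j _ hij
    rw [Function.onFun, Finset.disjoint_left]
    intro k h1 h2
    rw [Finset.mem_Ico] at h1 h2
    rcases lt_or_gt_of_ne hij with h | h
    · have := hm (2 * i + 1) (2 * j) (by omega)
      omega
    · have := hm (2 * j + 1) (2 * i) (by omega)
      omega

/-- Let `ζ` be a partition with `ζ_{2i−1} − ζ_{2i} ≤ 1` for all `i ≥ 1` and let `ξ` be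
a partition with all terms even satisfying `ξ_{2i} = ξ_{2i+1}` for all `i ≥ 1`
(zero-based: `ζ(2i) ≤ ζ(2i+1) + 1` and `ξ(2i+1) = ξ(2i+2)`).  If `π = ζ + ξ` is the
termwise sum, then `𝒪(π′) = 𝒪(ζ′) + 𝒪(ξ′)`. -/
theorem oddParts_conj_add (zeta xi : ℕ → ℕ)
    (hzeta : IsPartitionFun zeta) (hC : ∀ i, zeta (2 * i) ≤ zeta (2 * i + 1) + 1)
    (hxi : IsPartitionFun xi) (hxieven : ∀ i, Even (xi i))
    (hD : ∀ i, xi (2 * i + 1) = xi (2 * i + 2)) :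
    oddParts (conjFun (fun i => zeta i + xi i)) =
      oddParts (conjFun zeta) + oddParts (conjFun xi) := by
  obtain ⟨N, hN⟩ := hzeta.2
  obtain ⟨K, hK⟩ := hxi.2
  have hs : ∀ i, N + K ≤ i → zeta i + xi i = 0 := by
    intro i hi
    rw [hN i (by omega), hK i (by omega)]
  have hp : IsPartitionFun (fun i => zeta i + xi i) :=
    ⟨fun i j h => Nat.add_le_add (hzeta.1 i j h) (hxi.1 i j h), N + K, hs⟩
  rw [oddParts_conj_eq_sum _ hp (N + K) hs,
    oddParts_conj_eq_sum _ hzeta (N + K) (fun i hi => hN i (by omega)),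
    oddParts_conj_eq_sum _ hxi (N + K) (fun i hi => hK i (by omega)),
    ← Finset.sum_add_distrib]
  refine Finset.sum_congr rfl fun i _ => ?_
  have h1 := hzeta.1 (2 * i) (2 * i + 1) (by omega)
  have h2 := hxi.1 (2 * i) (2 * i + 1) (by omega)
  omega
end

section
/- The map γ(ζ, ξ) = ζ + ξ (termwise sum) is a bijection from 𝒞 × 𝒟 onto the set 𝒫 of all partitions, where 𝒞 is the set of partitions ζ satisfying ζ_{2i−1} − ζ_{2i} ≤ 1 for all i ≥ 1 and 𝒟 is the set of partitions ξ with all terms even satisfying ξ_{2i} = ξ_{2i+1} for all i ≥ 1. That is, every partition π can be written uniquely as π = ζ + ξ with ζ ∈ 𝒞 and ξ ∈ 𝒟. Moreover, the sum of the parts of π equals the sum of the parts of ζ plus the sum of the parts of ξ. -/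
/-- `𝒞`: partitions `ζ` with `ζ_{2i−1} − ζ_{2i} ≤ 1` for all `i ≥ 1`
(zero-based: `ζ(2i) ≤ ζ(2i+1) + 1`). -/
def memC (f : ℕ → ℕ) : Prop :=
  IsPartitionFun f ∧ ∀ i, f (2 * i) ≤ f (2 * i + 1) + 1

/-- `𝒟`: partitions `ξ` with all terms even and `ξ_{2i} = ξ_{2i+1}` for all `i ≥ 1`
(zero-based: `ξ(2i+1) = ξ(2i+2)`). -/
def memD (f : ℕ → ℕ) : Prop :=
  IsPartitionFun f ∧ (∀ i, Even (f i)) ∧ ∀ i, f (2 * i + 1) = f (2 * i + 2)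

theorem gb_down (P : ℕ → Prop) (N : ℕ) (h0 : ∀ k, N ≤ k → P k)
    (hs : ∀ k, P (k + 1) → P k) : ∀ k, P k := by
  have key : ∀ n k, N ≤ k + n → P k := by
    intro n
    induction n with
    | zero => intro k hk; exact h0 k hk
    | succ n ih => intro k hk; exact hs k (ih (k + 1) (by omega))
  intro k
  exact key N k (by omega)

theorem gb_summable (f : ℕ → ℕ) (hf : IsPartitionFun f) : Summable f := by
  obtain ⟨-, N, hN⟩ := hf
  apply summable_of_ne_finset_zero (s := Finset.range N)
  intro b hb
  exact hN b (by simpa using hb)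

theorem gb_exists (d : ℕ → ℕ) (N : ℕ) (hd : ∀ k, N ≤ k → d k = 0) :
    ∃ X : ℕ → ℕ, (∀ k, X k = X (k + 1) + 2 * (d k / 2)) ∧ ∀ k, N ≤ k → X k = 0 := by
  refine ⟨fun k => ∑ j ∈ Finset.Ico k N, 2 * (d j / 2), ?_, ?_⟩
  · intro k
    by_cases hk : k < N
    · have := Finset.sum_eq_sum_Ico_succ_bot hk (fun j => 2 * (d j / 2))
      simp only [this]
      omega
    · have h1 : Finset.Ico k N = ∅ := Finset.Ico_eq_empty (by omega)
      have h2 : Finset.Ico (k + 1) N = ∅ := Finset.Ico_eq_empty (by omega)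
      simp [h1, h2, hd k (by omega)]
  · intro k hk
    simp [Finset.Ico_eq_empty (show ¬ k < N by omega)]

/-- The map `γ(ζ, ξ) = ζ + ξ` (termwise sum) is a bijection from `𝒞 × 𝒟` onto the set
`𝒫` of all partitions: the termwise sum of a pair in `𝒞 × 𝒟` is a partition, every
partition `π` is uniquely `π = ζ + ξ` with `ζ ∈ 𝒞`, `ξ ∈ 𝒟`, and the sum of the parts
of `π` equals the sum of the parts of `ζ` plus that of `ξ`. -/
theorem gamma_bijection :
    (∀ zeta xi : ℕ → ℕ, memC zeta → memD xi →
      IsPartitionFun (fun i => zeta i + xi i) ∧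
      partSum (fun i => zeta i + xi i) = partSum zeta + partSum xi) ∧
    (∀ pi : ℕ → ℕ, IsPartitionFun pi →
      ∃! p : (ℕ → ℕ) × (ℕ → ℕ), memC p.1 ∧ memD p.2 ∧ ∀ i, p.1 i + p.2 i = pi i) := by
  constructor
  · intro zeta xi hz hx
    refine ⟨⟨?_, ?_⟩, ?_⟩
    · intro i j hij
      exact Nat.add_le_add (hz.1.1 i j hij) (hx.1.1 i j hij)
    · obtain ⟨N, hN⟩ := hz.1.2
      obtain ⟨M, hM⟩ := hx.1.2
      refine ⟨N + M, fun i hi => ?_⟩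
      simp [hN i (by omega), hM i (by omega)]
    · exact (gb_summable zeta hz.1).tsum_add (gb_summable xi hx.1)
  · intro pi hpi
    obtain ⟨hmono, N, hN⟩ := hpi
    obtain ⟨X, hX, hX0⟩ := gb_exists (fun k => pi (2 * k) - pi (2 * k + 1)) N
      (fun k hk => by simp [hN (2 * k) (by omega)])
    have hs : ∀ i, pi (i + 1) ≤ pi i := fun i => hmono _ _ (Nat.le_succ i)
    have hEven : ∀ k, Even (X k) := by
      refine gb_down _ N ?_ ?_
      · intro k hk; simp [hX0 k hk]
      · intro k ih
        rw [hX k]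
        exact ih.add (even_two_mul _)
    have hle : ∀ k, X k ≤ pi (2 * k) := by
      refine gb_down _ N ?_ ?_
      · intro k hk; simp [hX0 k hk]
      · intro k ih
        have h1 := hX k
        have h2 := hs (2 * k)
        have h3 := hs (2 * k + 1)
        rw [show 2 * (k + 1) = 2 * k + 1 + 1 by ring] at ih
        omega
    have e0 : ∀ k, (2 * k + 1) / 2 = k := fun k => by omega
    have e1 : ∀ k, (2 * k + 1 + 1) / 2 = k + 1 := fun k => by omega
    have hle2 : ∀ i, X ((i + 1) / 2) ≤ pi i := by
      intro i
      have h := hle ((i + 1) / 2)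
      have := hmono i (2 * ((i + 1) / 2)) (by omega)
      omega
    have step : ∀ k, X k = X (k + 1) + 2 * ((pi (2 * k) - pi (2 * k + 1)) / 2) := hX
    refine ⟨(fun i => pi i - X ((i + 1) / 2), fun i => X ((i + 1) / 2)), ⟨⟨⟨?_, ?_⟩, ?_⟩, ⟨⟨?_, ?_⟩, ?_, ?_⟩, ?_⟩, ?_⟩
    · intro i j hij
      refine antitone_nat_of_succ_le (f := fun i => pi i - X ((i + 1) / 2)) ?_ hij
      intro n
      rcases Nat.even_or_odd' n with ⟨k, rfl | rfl⟩
      · simp only [e0, e1]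
        have := step k
        have := hs (2 * k)
        omega
      · have e2 : (2 * k + 1 + 1 + 1) / 2 = k + 1 := by omega
        simp only [e1, e2]
        have := hs (2 * k + 1)
        omega
    · exact ⟨N, fun i hi => by simp [hN i hi]⟩
    · intro i
      simp only [e0, e1]
      have := step i
      have := hs (2 * i)
      have h3 := hle2 (2 * i + 1)
      rw [e1] at h3
      omega
    · intro i j hij
      refine antitone_nat_of_succ_le (f := fun k => X k) ?_ (show (i + 1) / 2 ≤ (j + 1) / 2 by omega)
      intro n
      have := step n
      omega
    · exact ⟨2 * N, fun i hi => hX0 _ (by omega)⟩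
    · exact fun i => hEven _
    · intro i
      have e2 : (2 * i + 2 + 1) / 2 = i + 1 := by omega
      simp only [e1, e2]
    · intro i
      exact Nat.sub_add_cancel (hle2 i)
    · rintro ⟨z, x⟩ ⟨⟨⟨hz, -⟩, hz2⟩, ⟨⟨hx, -⟩, hxe, hx2⟩, hsum⟩
      simp only at hz hz2 hx hxe hx2 hsum
      have hxX : ∀ k, x (2 * k) = X k ∧ x (2 * k + 1) = X (k + 1) := by
        refine gb_down _ N ?_ ?_
        · intro k hk
          have h1 := hsum (2 * k)
          have h2 := hsum (2 * k + 1)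
          rw [hN _ (by omega)] at h1 h2
          rw [hX0 k hk, hX0 (k + 1) (by omega)]
          omega
        · rintro k ⟨ih, -⟩
          rw [show 2 * (k + 1) = 2 * k + 2 by ring, ← hx2 k] at ih
          refine ⟨?_, ih⟩
          have a1 := hsum (2 * k)
          have a2 := hsum (2 * k + 1)
          have a3 := hz2 k
          have a4 := hz (2 * k) (2 * k + 1) (by omega)
          have a5 := hx (2 * k) (2 * k + 1) (by omega)
          obtain ⟨u, hu⟩ := hxe (2 * k)
          obtain ⟨v, hv⟩ := hxe (2 * k + 1)
          have := step k
          omega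
      have hx' : ∀ i, x i = X ((i + 1) / 2) := by
        intro i
        rcases Nat.even_or_odd' i with ⟨k, rfl | rfl⟩
        · rw [e0]; exact (hxX k).1
        · rw [e1]; exact (hxX k).2
      refine Prod.ext (funext fun i => ?_) (funext hx')
      have := hsum i
      have := hx' i
      simp only
      omega
end

section
/- Let ζ be a partition satisfying ζ_{2i−1} − ζ_{2i} ≤ 1 for all i ≥ 1, let ξ be a partition with all terms even satisfying ξ_{2i} = ξ_{2i+1} for all i ≥ 1, and let π = ζ + ξ be their termwise sum. Then the number of indices i ≥ 1 for which π_{2i−1} + π_{2i} is odd equals the number of odd parts of the conjugate ζ′, and consequently ξ₁ = 𝒪(π′) − #{i ≥ 1 : π_{2i−1} + π_{2i} is odd}. -/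
theorem lt_conjFun_iff (f : ℕ → ℕ) (hf : IsPartitionFun f) (k j : ℕ) :
    j < conjFun f k ↔ k + 1 ≤ f j := by
  obtain ⟨hmono, N, hN⟩ := hf
  have hex : ∃ m, ¬ (k + 1 ≤ f m) := ⟨N, by rw [hN N le_rfl]; omega⟩
  classical
  have hset : {j | k + 1 ≤ f j} = ((Finset.range (Nat.find hex) : Finset ℕ) : Set ℕ) := by
    ext j
    simp only [Set.mem_ofPred_eq, Finset.coe_range, Set.mem_Iio]
    constructor
    · intro h
      by_contra hlt
      have h1 := hmono _ _ (not_lt.mp hlt)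
      have h2 := Nat.find_spec hex
      omega
    · intro h
      exact not_not.mp (Nat.find_min hex h)
  have hc : conjFun f k = Nat.find hex := by
    unfold conjFun
    rw [hset, Set.ncard_coe_finset, Finset.card_range]
  rw [hc]
  have := Set.ext_iff.mp hset j
  simp only [Set.mem_ofPred_eq, Finset.coe_range, Set.mem_Iio] at this
  exact this.symm

theorem oddParts_conjFun (f : ℕ → ℕ) (hf : IsPartitionFun f) (N : ℕ)
    (hN : ∀ i, N ≤ i → f i = 0) :
    oddParts (conjFun f) = ∑ i ∈ Finset.range N, (f (2 * i) - f (2 * i + 1)) := by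
  have hset : {k | Odd (conjFun f k)} =
      (((Finset.range N).biUnion fun i => Finset.Ico (f (2 * i + 1)) (f (2 * i)) : Finset ℕ) :
        Set ℕ) := by
    ext k
    simp only [Set.mem_ofPred_eq, Finset.mem_coe, Finset.mem_biUnion, Finset.mem_range,
      Finset.mem_Ico]
    have key := lt_conjFun_iff f hf k
    constructor
    · rintro ⟨i, hi⟩
      have h1 := key (2 * i)
      have h2 := key (2 * i + 1)
      refine ⟨i, ?_, by omega, by omega⟩
      by_contra hlt
      have := hN (2 * i) (by omega)
      omega
    · rintro ⟨i, -, h1, h2⟩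
      have h3 := key (2 * i)
      have h4 := key (2 * i + 1)
      exact ⟨i, by omega⟩
  unfold oddParts
  rw [hset, Set.ncard_coe_finset, Finset.card_biUnion]
  · simp
  · intro i _ j _ hij
    refine Finset.disjoint_left.mpr ?_
    intro k hk hk'
    rw [Finset.mem_Ico] at hk hk'
    rcases lt_or_gt_of_ne hij with h | h
    · have := hf.1 (2 * i + 1) (2 * j) (by omega)
      omega
    · have := hf.1 (2 * j + 1) (2 * i) (by omega)
      omega

/-- Let `ζ` be a partition with `ζ_{2i−1} − ζ_{2i} ≤ 1` for all `i ≥ 1`, let `ξ` be a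
partition with all terms even and `ξ_{2i} = ξ_{2i+1}` for all `i ≥ 1`, and let
`π = ζ + ξ` termwise.  Then the number of indices `i ≥ 1` with `π_{2i−1} + π_{2i}` odd
(zero-based: `π(2i) + π(2i+1)` odd) equals `𝒪(ζ′)`, and consequently
`ξ₁ = 𝒪(π′) − #{i ≥ 1 : π_{2i−1} + π_{2i} odd}`. -/
theorem xi_one_recovery (zeta xi : ℕ → ℕ)
    (hzeta : IsPartitionFun zeta) (hC : ∀ i, zeta (2 * i) ≤ zeta (2 * i + 1) + 1)
    (hxi : IsPartitionFun xi) (hxieven : ∀ i, Even (xi i))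
    (hD : ∀ i, xi (2 * i + 1) = xi (2 * i + 2))
    (pi : ℕ → ℕ) (hpi : ∀ i, pi i = zeta i + xi i) :
    {i : ℕ | Odd (pi (2 * i) + pi (2 * i + 1))}.ncard = oddParts (conjFun zeta) ∧
    xi 0 = oddParts (conjFun pi) - {i : ℕ | Odd (pi (2 * i) + pi (2 * i + 1))}.ncard := by
  obtain ⟨N₁, hN₁⟩ := hzeta.2
  obtain ⟨N₂, hN₂⟩ := hxi.2
  have hz : ∀ i, N₁ + N₂ ≤ i → zeta i = 0 := fun i hi => hN₁ i (by omega)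
  have hx : ∀ i, N₁ + N₂ ≤ i → xi i = 0 := fun i hi => hN₂ i (by omega)
  have hp : ∀ i, N₁ + N₂ ≤ i → pi i = 0 := fun i hi => by rw [hpi, hz i hi, hx i hi]
  have hpart : IsPartitionFun pi := by
    refine ⟨fun i j hij => ?_, _, hp⟩
    have h1 := hzeta.1 i j hij
    have h2 := hxi.1 i j hij
    rw [hpi, hpi]
    omega
  generalize N₁ + N₂ = N at hz hx hp
  have e1 := oddParts_conjFun zeta hzeta N hz
  have e2 := oddParts_conjFun pi hpart N hp
  have e3 : {i : ℕ | Odd (pi (2 * i) + pi (2 * i + 1))}.ncard =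
      ∑ i ∈ Finset.range N, (zeta (2 * i) - zeta (2 * i + 1)) := by
    have hset : {i : ℕ | Odd (pi (2 * i) + pi (2 * i + 1))} =
        (((Finset.range N).filter fun i => Odd (pi (2 * i) + pi (2 * i + 1)) : Finset ℕ) :
          Set ℕ) := by
      ext i
      simp only [Set.mem_ofPred_eq, Finset.coe_filter, Finset.mem_range]
      refine ⟨fun h => ⟨?_, h⟩, fun h => h.2⟩
      by_contra hlt
      rw [hp (2 * i) (by omega), hp (2 * i + 1) (by omega)] at h
      simp at h
    rw [hset, Set.ncard_coe_finset, Finset.card_filter]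
    refine Finset.sum_congr rfl fun i _ => ?_
    have h1 := hC i
    have h2 := hzeta.1 (2 * i) (2 * i + 1) (by omega)
    obtain ⟨a, ha⟩ := hxieven (2 * i)
    obtain ⟨b, hb⟩ := hxieven (2 * i + 1)
    rw [hpi, hpi, ha, hb]
    split_ifs with h <;> rw [Nat.odd_iff] at h <;> omega
  have e4 : ∀ M, ∑ i ∈ Finset.range M, (pi (2 * i) - pi (2 * i + 1)) + xi (2 * M) =
      ∑ i ∈ Finset.range M, (zeta (2 * i) - zeta (2 * i + 1)) + xi 0 := by
    intro M
    induction M with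
    | zero => simp
    | succ M ih =>
      rw [Finset.sum_range_succ, Finset.sum_range_succ, hpi (2 * M), hpi (2 * M + 1)]
      have h1 := hzeta.1 (2 * M) (2 * M + 1) (by omega)
      have h2 := hxi.1 (2 * M) (2 * M + 1) (by omega)
      have h3 := hD M
      rw [show 2 * (M + 1) = 2 * M + 2 by ring]
      omega
  have e5 := e4 N
  have e6 := hx (2 * N) (by omega)
  exact ⟨by omega, by omega⟩
end

section
/- Let ζ be a partition satisfying ζ_{2i−1} − ζ_{2i} ≤ 1 for all i ≥ 1, let ξ be a partition with all terms even satisfying ξ_{2i} = ξ_{2i+1} for all i ≥ 1, and let π = ζ + ξ be their termwise sum. Then for every i ≥ 1, ξ_{2i} = ξ₁ − Σ_{j=1}^{i} (π_{2j−1} − π_{2j}) + Σ_{j=1}^{i} P(π_{2j−1} + π_{2j}), where P(k) = 0 if k is even and P(k) = 1 if k is odd. -/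
/-- Let `ζ` be a partition with `ζ_{2i−1} − ζ_{2i} ≤ 1` for all `i ≥ 1`, let `ξ` be a
partition with all terms even and `ξ_{2i} = ξ_{2i+1}` for all `i ≥ 1`, and let
`π = ζ + ξ` termwise.  Then for every `i ≥ 1`,
`ξ_{2i} = ξ₁ − Σ_{j=1}^{i} (π_{2j−1} − π_{2j}) + Σ_{j=1}^{i} P(π_{2j−1} + π_{2j})`,
an identity in `ℤ`, where `P(k) = k % 2` is the parity function.  (Zero-based: for
every `i : ℕ`, `ξ(2i+1) = ξ(0) − Σ_{j=0}^{i} (π(2j) − π(2j+1)) + Σ_{j=0}^{i}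
(π(2j) + π(2j+1)) % 2`.) -/
theorem xi_recovery (zeta xi : ℕ → ℕ)
    (hzeta : IsPartitionFun zeta) (hC : ∀ i, zeta (2 * i) ≤ zeta (2 * i + 1) + 1)
    (hxi : IsPartitionFun xi) (hxieven : ∀ i, Even (xi i))
    (hD : ∀ i, xi (2 * i + 1) = xi (2 * i + 2))
    (pi : ℕ → ℕ) (hpi : ∀ i, pi i = zeta i + xi i) :
    ∀ i : ℕ, (xi (2 * i + 1) : ℤ) =
      (xi 0 : ℤ)
        - ∑ j ∈ Finset.range (i + 1), ((pi (2 * j) : ℤ) - (pi (2 * j + 1) : ℤ))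
        + ∑ j ∈ Finset.range (i + 1), (((pi (2 * j) + pi (2 * j + 1)) % 2 : ℕ) : ℤ) := by
  have key : ∀ j, (xi (2 * j + 1) : ℤ) = (xi (2 * j) : ℤ)
      - ((pi (2 * j) : ℤ) - (pi (2 * j + 1) : ℤ))
      + (((pi (2 * j) + pi (2 * j + 1)) % 2 : ℕ) : ℤ) := by
    intro j
    have h1 := hC j
    have h2 := hzeta.1 (2 * j) (2 * j + 1) (by omega)
    obtain ⟨a, ha⟩ := hxieven (2 * j)
    obtain ⟨b, hb⟩ := hxieven (2 * j + 1)
    rw [hpi, hpi]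
    omega
  intro i
  induction i with
  | zero => simpa using key 0
  | succ n ih =>
    rw [Finset.sum_range_succ _ (n + 1), Finset.sum_range_succ _ (n + 1)]
    have h := key (n + 1)
    have h2 : xi (2 * (n + 1)) = xi (2 * n + 1) := (hD n).symm
    rw [h2, ih] at h
    rw [h]
    ring
end
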